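/- arXiv:1206.0489 — 4 statements merged into one kernel-verified Lean document; each statement's English description precedes it below -/
import Mathlib

section
/- Sum-difference inequality for mutual information: If X and Y are independent real-valued continuous random variables with all relevant differential entropies existing and finite, then for every α with 0 ≤ α ≤ 1, α·I(X+Y;X) + (1-α)·I(X+Y;Y) ≤ (1+α)·I(X-Y;X) + (2-α)·I(X-Y;Y), where I denotes mutual information. -/
open MeasureTheory ProbabilityTheory

/-- The differential entropy of a random variable `X` (with respect to a reference
measure `μ` on the value space, typically Lebesgue measure): if `f` is the density of
the law of `X` with respect to `μ`, then `h(X) = -E[log f(X)]`. -/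
noncomputable def dent {Ω E : Type*} [MeasurableSpace Ω] [MeasurableSpace E]
    (μ : Measure E) (P : Measure Ω) (X : Ω → E) : ℝ :=
  -∫ x, Real.log (((P.map X).rnDeriv μ x).toReal) ∂(P.map X)

/-- `X` is a continuous random variable (its law is absolutely continuous with respect
to the reference measure `μ`, i.e. it has a density `f`), and its differential entropy
exists and is finite (the log-density is integrable under the law of `X`). -/
def FiniteDent {Ω E : Type*} [MeasurableSpace Ω] [MeasurableSpace E]
    (μ : Measure E) (P : Measure Ω) (X : Ω → E) : Prop :=
  P.map X ≪ μ ∧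
    Integrable (fun x => Real.log (((P.map X).rnDeriv μ x).toReal)) (P.map X)

/-- The mutual information `I(X;Y) = h(X) + h(Y) - h(X,Y)` between two random
variables, with differential entropies taken with respect to the volume measures. -/
noncomputable def mutualInfo {Ω E F : Type*} [MeasurableSpace Ω] [MeasureSpace E] [MeasureSpace F]
    (P : Measure Ω) (X : Ω → E) (Y : Ω → F) : ℝ :=
  dent volume P X + dent volume P Y - dent volume P (fun ω => (X ω, Y ω))

open scoped ENNReal

section Density

variable {Ω α β : Type*} [MeasurableSpace Ω] [MeasurableSpace α] [MeasurableSpace β]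

/-- The image of a measure with density `p` under a measure-preserving map `T` with a measurable
left inverse `S` has density `p ∘ S`. -/
lemma map_withDensity_of_leftInverse {μ : Measure α} {ν : Measure β} {T : α → β} {S : β → α}
    (hT : MeasurePreserving T μ ν) (hS : Measurable S) (hST : Function.LeftInverse S T)
    {p : α → ℝ≥0∞} (hp : Measurable p) :
    (μ.withDensity p).map T = ν.withDensity (p ∘ S) := by
  ext s hs
  rw [Measure.map_apply hT.measurable hs, withDensity_apply _ (hT.measurable hs),
    withDensity_apply _ hs, ← hT.setLIntegral_comp_preimage hs (hp.comp hS)]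
  simp [hST _]

lemma dent_eq_of_map_eq_withDensity {μ : Measure α} [SigmaFinite μ] {P : Measure Ω} {Z : Ω → α}
    (hZ : Measurable Z) {p : α → ℝ≥0∞} (hp : Measurable p) (h : P.map Z = μ.withDensity p) :
    dent μ P Z = -∫ ω, Real.log (p (Z ω)).toReal ∂P := by
  have hae : (P.map Z).rnDeriv μ =ᵐ[P.map Z] p := by
    rw [h]
    exact (withDensity_absolutelyContinuous μ p).ae_le (Measure.rnDeriv_withDensity μ hp)
  rw [dent, integral_congr_ae (g := fun x => Real.log (p x).toReal)
      (hae.mono fun x hx => by simp only [hx]),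
    integral_map hZ.aemeasurable]
  exact (hp.ennreal_toReal.log).aestronglyMeasurable

lemma FiniteDent.map_eq_withDensity {μ : Measure α} [SigmaFinite μ] {P : Measure Ω}
    [IsProbabilityMeasure P] {Z : Ω → α} (h : FiniteDent μ P Z) :
    P.map Z = μ.withDensity ((P.map Z).rnDeriv μ) :=
  (Measure.withDensity_rnDeriv_eq _ _ h.1).symm

lemma FiniteDent.ae_pos_lt_top {μ : Measure α} [SigmaFinite μ] {P : Measure Ω}
    [IsProbabilityMeasure P] {Z : Ω → α} (h : FiniteDent μ P Z) :
    ∀ᵐ x ∂(P.map Z), 0 < (P.map Z).rnDeriv μ x ∧ (P.map Z).rnDeriv μ x < ∞ := by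
  filter_upwards [Measure.rnDeriv_pos h.1, h.1.ae_le (Measure.rnDeriv_lt_top (P.map Z) μ)]
    with x h₁ h₂ using ⟨h₁, h₂⟩

/-- The joint law of a volume-preserving injective image of a pair of independent variables. -/
lemma map_comp_pair_eq_withDensity {P : Measure Ω} [IsProbabilityMeasure P] {X Y : Ω → ℝ}
    (hX : Measurable X) (hY : Measurable Y) (hindep : IndepFun X Y P)
    (h₁ : FiniteDent volume P X) (h₂ : FiniteDent volume P Y) {T S : ℝ × ℝ → ℝ × ℝ}
    (hT : MeasurePreserving T volume volume) (hS : Measurable S)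
    (hST : Function.LeftInverse S T) :
    P.map (fun ω => T (X ω, Y ω)) = volume.withDensity
      fun z => (P.map X).rnDeriv volume (S z).1 * (P.map Y).rnDeriv volume (S z).2 := by
  have hXY : P.map (fun ω => (X ω, Y ω)) = (volume : Measure (ℝ × ℝ)).withDensity
      (fun z => (P.map X).rnDeriv volume z.1 * (P.map Y).rnDeriv volume z.2) := by
    rw [hindep.map_prod_eq_prod_map_map hX.aemeasurable hY.aemeasurable]
    conv_lhs => rw [h₁.map_eq_withDensity, h₂.map_eq_withDensity]
    exact prod_withDensity (Measure.measurable_rnDeriv _ _) (Measure.measurable_rnDeriv _ _)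
  have hmap := map_withDensity_of_leftInverse hT hS hST
    (p := fun z => (P.map X).rnDeriv volume z.1 * (P.map Y).rnDeriv volume z.2) (by fun_prop)
  rwa [← hXY, Measure.map_map hT.measurable (by fun_prop)] at hmap

/-- A volume-preserving injective image of a pair of independent variables has joint entropy
`h(X) + h(Y)`. -/
lemma dent_comp_pair_of_indepFun {P : Measure Ω} [IsProbabilityMeasure P] {X Y : Ω → ℝ}
    (hX : Measurable X) (hY : Measurable Y) (hindep : IndepFun X Y P)
    (h₁ : FiniteDent volume P X) (h₂ : FiniteDent volume P Y) {T S : ℝ × ℝ → ℝ × ℝ}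
    (hT : MeasurePreserving T volume volume) (hS : Measurable S)
    (hST : Function.LeftInverse S T) :
    dent volume P (fun ω => T (X ω, Y ω)) = dent volume P X + dent volume P Y := by
  have hTXY : Measurable fun ω => T (X ω, Y ω) := hT.measurable.comp (by fun_prop)
  rw [dent_eq_of_map_eq_withDensity hTXY (by fun_prop)
      (map_comp_pair_eq_withDensity hX hY hindep h₁ h₂ hT hS hST),
    dent_eq_of_map_eq_withDensity hX (by fun_prop) h₁.map_eq_withDensity,
    dent_eq_of_map_eq_withDensity hY (by fun_prop) h₂.map_eq_withDensity, ← neg_add,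
    ← integral_add]
  rotate_left
  · exact h₁.2.comp_measurable hX
  · exact h₂.2.comp_measurable hY
  congr 1
  refine integral_congr_ae ?_
  filter_upwards [ae_of_ae_map hX.aemeasurable h₁.ae_pos_lt_top,
    ae_of_ae_map hY.aemeasurable h₂.ae_pos_lt_top] with ω hω₁ hω₂
  simp only [hST _, ENNReal.toReal_mul]
  exact Real.log_mul (ENNReal.toReal_pos hω₁.1.ne' hω₁.2.ne).ne'
    (ENNReal.toReal_pos hω₂.1.ne' hω₂.2.ne).ne'

/-- Along a measure-preserving map onto the law of `Z`, the log-density of `Z` is integrable with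
integral `-h(Z)`, and exponentiating it recovers the density. -/
lemma FiniteDent.logDensity_comp {μ : Measure α} [SigmaFinite μ] {P : Measure Ω}
    [IsProbabilityMeasure P] {Z : Ω → α} (h : FiniteDent μ P Z) {Q : Measure β} {π : β → α}
    (hπ : MeasurePreserving π Q (P.map Z)) :
    Integrable (fun z => Real.log ((P.map Z).rnDeriv μ (π z)).toReal) Q ∧
    ∫ z, Real.log ((P.map Z).rnDeriv μ (π z)).toReal ∂Q = -dent μ P Z ∧
    ∀ᵐ z ∂Q, ENNReal.ofReal (Real.exp (Real.log ((P.map Z).rnDeriv μ (π z)).toReal)) =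
      (P.map Z).rnDeriv μ (π z) := by
  refine ⟨hπ.integrable_comp_of_integrable h.2, ?_, ?_⟩
  · rw [dent, neg_neg, ← hπ.map_eq, integral_map hπ.aemeasurable]
    rw [hπ.map_eq]
    exact (Measure.measurable_rnDeriv _ _).ennreal_toReal.log.aestronglyMeasurable
  · filter_upwards [hπ.quasiMeasurePreserving.ae h.ae_pos_lt_top] with z hz
    rw [Real.exp_log (ENNReal.toReal_pos hz.1.ne' hz.2.ne), ENNReal.ofReal_toReal hz.2.ne]

end Density

/-- Gibbs' inequality in exponential form. -/
lemma integral_nonpos_of_lintegral_exp_le_one {α : Type*} [MeasurableSpace α] {Q : Measure α}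
    [IsProbabilityMeasure Q] {l : α → ℝ} (hl : Integrable l Q)
    (h : ∫⁻ z, ENNReal.ofReal (Real.exp (l z)) ∂Q ≤ 1) : ∫ z, l z ∂Q ≤ 0 := by
  have hm : AEStronglyMeasurable (fun z => Real.exp (l z)) Q :=
    Real.continuous_exp.comp_aestronglyMeasurable hl.1
  have hnn : 0 ≤ᵐ[Q] fun z => Real.exp (l z) := ae_of_all _ fun z => (Real.exp_pos _).le
  have hexp : Integrable (fun z => Real.exp (l z)) Q :=
    (lintegral_ofReal_ne_top_iff_integrable hm hnn).1 (h.trans_lt ENNReal.one_lt_top).ne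
  have h₁ : ∫ z, Real.exp (l z) ∂Q ≤ 1 := by
    rw [integral_eq_lintegral_of_nonneg_ae hnn hm]
    exact ENNReal.toReal_le_of_le_ofReal zero_le_one (by simpa using h)
  have h₂ : ∫ z, (l z + 1) ∂Q ≤ ∫ z, Real.exp (l z) ∂Q :=
    integral_mono (hl.add (integrable_const 1)) hexp fun z => Real.add_one_le_exp _
  rw [integral_add hl (integrable_const 1)] at h₂
  simp at h₂
  linarith

section Coupling

/-- Given a joint density `F` on `ℝ × ℝ` whose first marginal has density `k`, the law of
`(D, Y₁, Y₂)` where `(D, Y₁)` and `(D, Y₂)` have density `F` and `Y₁`, `Y₂` are conditionally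
independent given `D`. -/
noncomputable def condIndepCoupling (F : ℝ × ℝ → ℝ≥0∞) (k : ℝ → ℝ≥0∞) : Measure (ℝ × ℝ × ℝ) :=
  volume.withDensity fun z => F (z.1, z.2.1) * F (z.1, z.2.2) / k z.1

variable {F : ℝ × ℝ → ℝ≥0∞} {k : ℝ → ℝ≥0∞}

lemma lintegral_condIndepCoupling (hF : Measurable F) (hk : Measurable k)
    {φ : ℝ × ℝ × ℝ → ℝ≥0∞} (hφ : Measurable φ) :
    ∫⁻ z, φ z ∂(condIndepCoupling F k) =
      ∫⁻ d, ∫⁻ y₁, ∫⁻ y₂, F (d, y₁) * F (d, y₂) / k d * φ (d, y₁, y₂) := by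
  rw [condIndepCoupling, lintegral_withDensity_eq_lintegral_mul _ (by fun_prop) hφ,
    Measure.volume_eq_prod, lintegral_prod _ (by fun_prop)]
  refine lintegral_congr fun d => ?_
  rw [Measure.volume_eq_prod, lintegral_prod _ (by fun_prop)]
  rfl

lemma map_fst_condIndepCoupling (hF : Measurable F) (hk : Measurable k)
    (hFk : ∀ᵐ d, ∫⁻ y, F (d, y) = k d) (hfin : ∀ᵐ d, k d < ∞) :
    (condIndepCoupling F k).map (fun z => (z.1, z.2.1)) = volume.withDensity F := by
  refine Measure.ext_of_lintegral _ fun φ hφ => ?_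
  rw [lintegral_map hφ (by fun_prop), lintegral_condIndepCoupling hF hk (by fun_prop),
    lintegral_withDensity_eq_lintegral_mul _ hF hφ, Measure.volume_eq_prod,
    lintegral_prod _ (by fun_prop)]
  refine lintegral_congr_ae ?_
  filter_upwards [hFk, hfin] with d hd hd'
  rcases eq_or_ne (k d) 0 with h0 | h0
  · have hz : ∀ᵐ y, F (d, y) = 0 := by
      rw [h0, lintegral_eq_zero_iff (by fun_prop)] at hd
      exact hd
    refine lintegral_congr_ae ?_
    filter_upwards [hz] with y hy
    simp [hy]
  · refine lintegral_congr fun y₁ => ?_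
    have : ∀ y₂, F (d, y₁) * F (d, y₂) / k d * φ (d, y₁) =
        F (d, y₁) / k d * φ (d, y₁) * F (d, y₂) := fun y₂ => by
      simp only [div_eq_mul_inv]; ring
    simp only [this, Pi.mul_apply]
    rw [lintegral_const_mul _ (by fun_prop), hd, mul_right_comm, ENNReal.div_mul_cancel h0 hd'.ne]

lemma map_snd_condIndepCoupling (hF : Measurable F) (hk : Measurable k)
    (hFk : ∀ᵐ d, ∫⁻ y, F (d, y) = k d) (hfin : ∀ᵐ d, k d < ∞) :
    (condIndepCoupling F k).map (fun z => (z.1, z.2.2)) = volume.withDensity F := by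
  rw [← map_fst_condIndepCoupling hF hk hFk hfin]
  refine Measure.ext_of_lintegral _ fun φ hφ => ?_
  rw [lintegral_map hφ (by fun_prop), lintegral_map hφ (by fun_prop),
    lintegral_condIndepCoupling hF hk (by fun_prop),
    lintegral_condIndepCoupling hF hk (by fun_prop)]
  refine lintegral_congr fun d => ?_
  rw [lintegral_lintegral_swap (by fun_prop)]
  simp only [mul_comm (F (d, _)) (F (d, _))]

end Coupling

section Ratio

variable {f g k s : ℝ → ℝ≥0∞}

/-- The integral of a product of translated densities, as a function of the sum of the
translation parameters: the density at `x + y` of a fourfold convolution. -/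
lemma lintegral_translates_eq (x y : ℝ) :
    ∫⁻ d, ∫⁻ y₁, ∫⁻ y₂, g y₁ * f (d + y₂) * k (x - y₂) * k (d + y₁ - y) =
      ∫⁻ e, ∫⁻ v, ∫⁻ u, g (v + (x + y) - e) * f (e - u) * k u * k v := by
  symm
  rw [← lintegral_add_right_eq_self _ x]
  refine lintegral_congr fun d => ?_
  rw [← lintegral_add_right_eq_self _ (d - y)]
  refine lintegral_congr fun y₁ => ?_
  rw [← lintegral_sub_left_eq_self _ x]
  refine lintegral_congr fun y₂ => ?_
  rw [show y₁ + (d - y) + (x + y) - (d + x) = y₁ by ring,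
    show d + x - (x - y₂) = d + y₂ by ring, show y₁ + (d - y) = d + y₁ - y by ring]

lemma lintegral_convolution_eq_one (hf : Measurable f) (hg : Measurable g) (hk : Measurable k)
    (hf₁ : ∫⁻ x, f x = 1) (hg₁ : ∫⁻ x, g x = 1) (hk₁ : ∫⁻ x, k x = 1) :
    ∫⁻ t, ∫⁻ e, ∫⁻ v, ∫⁻ u, g (v + t - e) * f (e - u) * k u * k v = 1 := by
  have hshift : ∀ v e, ∫⁻ t, g (v + t - e) = 1 := fun v e => by
    rw [← hg₁, ← lintegral_add_right_eq_self g (v - e)]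
    exact lintegral_congr fun t => by ring_nf
  rw [lintegral_lintegral_swap (by fun_prop)]
  have h₁ : ∀ e, ∫⁻ t, ∫⁻ v, ∫⁻ u, g (v + t - e) * f (e - u) * k u * k v =
      ∫⁻ u, f (e - u) * k u := fun e => by
    rw [lintegral_lintegral_swap (by fun_prop)]
    have h₂ : ∀ v, ∫⁻ t, ∫⁻ u, g (v + t - e) * f (e - u) * k u * k v =
        k v * ∫⁻ u, f (e - u) * k u := fun v => by
      have h₃ : ∀ t, ∫⁻ u, g (v + t - e) * f (e - u) * k u * k v =
          g (v + t - e) * (k v * ∫⁻ u, f (e - u) * k u) := fun t => by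
        rw [← lintegral_const_mul _ (by fun_prop), ← lintegral_const_mul _ (by fun_prop)]
        exact lintegral_congr fun u => by ring
      simp only [h₃]
      rw [lintegral_mul_const _ (by fun_prop), hshift, one_mul]
    simp only [h₂]
    rw [lintegral_mul_const _ (by fun_prop), hk₁, one_mul]
  simp only [h₁]
  rw [lintegral_lintegral_swap (by fun_prop), ← hk₁]
  refine lintegral_congr fun u => ?_
  rw [lintegral_mul_const _ (by fun_prop), lintegral_sub_right_eq_self, hf₁, one_mul]

/-- The density ratio between the subprobability density attached to submodularity and the law of
the conditionally independent coupling together with an independent copy of `(X, Y)`. -/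
noncomputable def couplingRatio (f g k s : ℝ → ℝ≥0∞) (z : (ℝ × ℝ × ℝ) × ℝ × ℝ) : ℝ≥0∞ :=
  k z.1.1 * k (z.2.1 - z.1.2.2) * k (z.1.1 + z.1.2.1 - z.2.2) /
    f (z.1.1 + z.1.2.1) / g z.1.2.2 / s (z.2.1 + z.2.2)

lemma lintegral_couplingRatio_le_one (hf : Measurable f) (hg : Measurable g) (hk : Measurable k)
    (hs : Measurable s) (hf₁ : ∫⁻ x, f x = 1) (hg₁ : ∫⁻ x, g x = 1) (hk₁ : ∫⁻ x, k x = 1)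
    {ρ : Measure (ℝ × ℝ)} [SFinite ρ]
    (hρ : ρ.map (fun w => w.1 + w.2) = volume.withDensity s) :
    ∫⁻ z, couplingRatio f g k s z
      ∂((condIndepCoupling (fun z => f (z.1 + z.2) * g z.2) k).prod ρ) ≤ 1 := by
  have hm : Measurable (couplingRatio f g k s) := by unfold couplingRatio; fun_prop
  have : SFinite (condIndepCoupling (fun z => f (z.1 + z.2) * g z.2) k) := by
    unfold condIndepCoupling; infer_instance
  set r : ℝ → ℝ≥0∞ := fun t => ∫⁻ e, ∫⁻ v, ∫⁻ u, g (v + t - e) * f (e - u) * k u * k v with hr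
  have hrm : Measurable r := by fun_prop
  calc
    _ = ∫⁻ w, (∫⁻ d, ∫⁻ y₁, ∫⁻ y₂, f (d + y₁) * g y₁ * (f (d + y₂) * g y₂) / k d *
          couplingRatio f g k s ((d, y₁, y₂), w)) ∂ρ := by
      rw [lintegral_prod_symm _ hm.aemeasurable]
      exact lintegral_congr fun w =>
        lintegral_condIndepCoupling (by fun_prop) hk (by fun_prop)
    _ ≤ ∫⁻ w, (∫⁻ d, ∫⁻ y₁, ∫⁻ y₂,
          g y₁ * f (d + y₂) * k (w.1 - y₂) * k (d + y₁ - w.2) * (s (w.1 + w.2))⁻¹) ∂ρ := by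
      refine lintegral_mono fun w => lintegral_mono fun d => lintegral_mono fun y₁ =>
        lintegral_mono fun y₂ => ?_
      calc
        _ = g y₁ * f (d + y₂) * k (w.1 - y₂) * k (d + y₁ - w.2) * (s (w.1 + w.2))⁻¹ *
            ((f (d + y₁) / f (d + y₁)) * (g y₂ / g y₂) * (k d / k d)) := by
          simp only [couplingRatio, div_eq_mul_inv]
          ring
        _ ≤ _ := mul_le_of_le_one_right' <| mul_le_one' (mul_le_one' ENNReal.div_self_le_one
          ENNReal.div_self_le_one) ENNReal.div_self_le_one
    _ = ∫⁻ w, r (w.1 + w.2) * (s (w.1 + w.2))⁻¹ ∂ρ := by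
      refine lintegral_congr fun w => ?_
      rw [hr]
      dsimp only
      rw [← lintegral_translates_eq, ← lintegral_mul_const _ (by fun_prop)]
      refine lintegral_congr fun d => ?_
      rw [← lintegral_mul_const _ (by fun_prop)]
      refine lintegral_congr fun y₁ => ?_
      rw [← lintegral_mul_const _ (by fun_prop)]
    _ = ∫⁻ t, s t * (r t * (s t)⁻¹) := by
      rw [← lintegral_map (f := fun t => r t * (s t)⁻¹) (g := fun w : ℝ × ℝ => w.1 + w.2)
        (by fun_prop) (by fun_prop), hρ,
        lintegral_withDensity_eq_lintegral_mul _ hs (by fun_prop)]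
      rfl
    _ ≤ ∫⁻ t, r t := by
      gcongr with t
      calc s t * (r t * (s t)⁻¹) = r t * (s t / s t) := by rw [div_eq_mul_inv]; ring
        _ ≤ r t := mul_le_of_le_one_right' ENNReal.div_self_le_one
    _ = 1 := lintegral_convolution_eq_one hf hg hk hf₁ hg₁ hk₁

end Ratio

section Entropy

variable {Ω : Type*} [MeasurableSpace Ω] {P : Measure Ω} {X Y : Ω → ℝ}

lemma lintegral_rnDeriv_map_eq_one [IsProbabilityMeasure P] {Z : Ω → ℝ} (hZ : Measurable Z)
    (h : FiniteDent volume P Z) : ∫⁻ x, (P.map Z).rnDeriv volume x = 1 := by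
  have := Measure.isProbabilityMeasure_map (μ := P) hZ.aemeasurable
  rw [Measure.lintegral_rnDeriv h.1, measure_univ]

/-- The density of `X - Y` is the marginal of the joint density of `(X - Y, Y)`. -/
lemma ae_lintegral_eq_rnDeriv_map_sub {F : ℝ × ℝ → ℝ≥0∞} (hX : Measurable X) (hY : Measurable Y)
    (hF : Measurable F)
    (hM : P.map (fun ω => (X ω - Y ω, Y ω)) = volume.withDensity F) :
    ∀ᵐ d, ∫⁻ y, F (d, y) = (P.map (X - Y)).rnDeriv volume d := by
  have hD : P.map (X - Y) = volume.withDensity fun d => ∫⁻ y, F (d, y) := by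
    have : P.map (X - Y) = (P.map (fun ω => (X ω - Y ω, Y ω))).map Prod.fst := by
      rw [Measure.map_map (by fun_prop) (by fun_prop)]
      rfl
    rw [this, hM]
    refine Measure.ext_of_lintegral _ fun φ hφ => ?_
    rw [lintegral_map hφ (by fun_prop), lintegral_withDensity_eq_lintegral_mul _ hF (by fun_prop),
      lintegral_withDensity_eq_lintegral_mul _ (by fun_prop) hφ, Measure.volume_eq_prod,
      lintegral_prod _ (by fun_prop)]
    refine lintegral_congr fun d => ?_
    simp only [Pi.mul_apply]
    rw [lintegral_mul_const _ (by fun_prop)]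
  have := Measure.rnDeriv_withDensity volume (f := fun d => ∫⁻ y, F (d, y)) (by fun_prop)
  rw [← hD] at this
  filter_upwards [this] with d hd using hd.symm

/-- The sum-difference inequality for differential entropy. -/
theorem dent_add_add_le_three_mul_dent_sub [IsProbabilityMeasure P]
    (hX : Measurable X) (hY : Measurable Y) (hindep : IndepFun X Y P)
    (h₁ : FiniteDent volume P X) (h₂ : FiniteDent volume P Y)
    (h₃ : FiniteDent volume P (X + Y)) (h₄ : FiniteDent volume P (X - Y)) :
    dent volume P (X + Y) + dent volume P X + dent volume P Y ≤ 3 * dent volume P (X - Y) := by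
  set f := (P.map X).rnDeriv volume
  set g := (P.map Y).rnDeriv volume
  set k := (P.map (X - Y)).rnDeriv volume
  set s := (P.map (X + Y)).rnDeriv volume
  have hfm : Measurable f := Measure.measurable_rnDeriv _ _
  have hgm : Measurable g := Measure.measurable_rnDeriv _ _
  have hkm : Measurable k := Measure.measurable_rnDeriv _ _
  have hsm : Measurable s := Measure.measurable_rnDeriv _ _
  have hPX := Measure.isProbabilityMeasure_map (μ := P) hX.aemeasurable
  have hPY := Measure.isProbabilityMeasure_map (μ := P) hY.aemeasurable
  have hPXY := hindep.map_prod_eq_prod_map_map hX.aemeasurable hY.aemeasurable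
  set F : ℝ × ℝ → ℝ≥0∞ := fun z => f (z.1 + z.2) * g z.2
  have hFm : Measurable F := by fun_prop
  have hM : P.map (fun ω => (X ω - Y ω, Y ω)) = volume.withDensity F :=
    map_comp_pair_eq_withDensity hX hY hindep h₁ h₂ (measurePreserving_sub_prod volume volume)
      (S := fun z => (z.1 + z.2, z.2)) (by fun_prop) fun z => by simp
  have hFk := ae_lintegral_eq_rnDeriv_map_sub hX hY hFm hM
  have hkfin : ∀ᵐ d, k d < ∞ := Measure.rnDeriv_lt_top _ _
  set C := condIndepCoupling F k
  have hC₁ : MeasurePreserving (fun z : ℝ × ℝ × ℝ => (z.1, z.2.1)) C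
      (P.map fun ω => (X ω - Y ω, Y ω)) :=
    ⟨by fun_prop, by rw [hM]; exact map_fst_condIndepCoupling hFm hkm hFk hkfin⟩
  have hC₂ : MeasurePreserving (fun z : ℝ × ℝ × ℝ => (z.1, z.2.2)) C
      (P.map fun ω => (X ω - Y ω, Y ω)) :=
    ⟨by fun_prop, by rw [hM]; exact map_snd_condIndepCoupling hFm hkm hFk hkfin⟩
  have hPC : IsProbabilityMeasure C := by
    have := Measure.isProbabilityMeasure_map (μ := P)
      (f := fun ω => (X ω - Y ω, Y ω)) (by fun_prop)
    exact ⟨by simpa using hC₁.measure_preimage MeasurableSet.univ.nullMeasurableSet⟩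
  have hmp : ∀ {Z : Ω → ℝ × ℝ} {W : Ω → ℝ} (u : ℝ × ℝ → ℝ), Measurable Z → Measurable u →
      (∀ ω, u (Z ω) = W ω) → MeasurePreserving u (P.map Z) (P.map W) := fun u hZ hu h =>
    ⟨hu, by rw [Measure.map_map hu hZ]; congr 1; exact funext h⟩
  have hZm : Measurable fun ω => (X ω - Y ω, Y ω) := by fun_prop
  have hXYm : Measurable fun ω => (X ω, Y ω) := by fun_prop
  have hx₁ : MeasurePreserving (fun z : ℝ × ℝ × ℝ => z.1 + z.2.1) C (P.map X) :=
    (hmp (fun z => z.1 + z.2) hZm (by fun_prop) (by simp)).comp hC₁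
  have hy₂ : MeasurePreserving (fun z : ℝ × ℝ × ℝ => z.2.2) C (P.map Y) := by
    have := (hmp (W := Y) Prod.snd hZm measurable_snd fun _ => rfl).comp hC₂
    exact this
  have hd : MeasurePreserving (fun z : ℝ × ℝ × ℝ => z.1) C (P.map (X - Y)) := by
    have := (hmp (W := X - Y) Prod.fst hZm measurable_fst fun _ => rfl).comp hC₁
    exact this
  have hsub : MeasurePreserving (fun z : ℝ × ℝ => z.1 - z.2) ((P.map X).prod (P.map Y))
      (P.map (X - Y)) := hPXY ▸ hmp (fun z => z.1 - z.2) hXYm (by fun_prop) (by simp)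
  have hadd : MeasurePreserving (fun z : ℝ × ℝ => z.1 + z.2) ((P.map X).prod (P.map Y))
      (P.map (X + Y)) := hPXY ▸ hmp (fun z => z.1 + z.2) hXYm (by fun_prop) (by simp)
  set R := (P.map X).prod (P.map Y)
  have qd : MeasurePreserving (fun z : (ℝ × ℝ × ℝ) × ℝ × ℝ => z.1.1) (C.prod R) (P.map (X - Y)) :=
    hd.comp measurePreserving_fst
  have qx₁ : MeasurePreserving (fun z : (ℝ × ℝ × ℝ) × ℝ × ℝ => z.1.1 + z.1.2.1) (C.prod R)
      (P.map X) := hx₁.comp measurePreserving_fst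
  have qy₂ : MeasurePreserving (fun z : (ℝ × ℝ × ℝ) × ℝ × ℝ => z.1.2.2) (C.prod R)
      (P.map Y) := hy₂.comp measurePreserving_fst
  have qs : MeasurePreserving (fun z : (ℝ × ℝ × ℝ) × ℝ × ℝ => z.2.1 + z.2.2) (C.prod R)
      (P.map (X + Y)) := hadd.comp measurePreserving_snd
  have qx₃y₂ : MeasurePreserving (fun z : (ℝ × ℝ × ℝ) × ℝ × ℝ => z.2.1 - z.1.2.2) (C.prod R)
      (P.map (X - Y)) :=
    (hsub.comp Measure.measurePreserving_swap).comp (hy₂.prod measurePreserving_fst)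
  have qx₁y₃ : MeasurePreserving (fun z : (ℝ × ℝ × ℝ) × ℝ × ℝ => z.1.1 + z.1.2.1 - z.2.2)
      (C.prod R) (P.map (X - Y)) :=
    hsub.comp (hx₁.prod measurePreserving_snd)
  obtain ⟨id, ed, ad⟩ := h₄.logDensity_comp qd
  obtain ⟨ix, ex, ax⟩ := h₁.logDensity_comp qx₁
  obtain ⟨iy, ey, ay⟩ := h₂.logDensity_comp qy₂
  obtain ⟨is, es, as⟩ := h₃.logDensity_comp qs
  obtain ⟨iu, eu, au⟩ := h₄.logDensity_comp qx₃y₂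
  obtain ⟨iv, ev, av⟩ := h₄.logDensity_comp qx₁y₃
  have key := integral_nonpos_of_lintegral_exp_le_one
    (((((id.add iu).add iv).sub ix).sub iy).sub is) (by
      refine le_of_eq_of_le (lintegral_congr_ae ?_) (lintegral_couplingRatio_le_one hfm hgm hkm hsm
        (lintegral_rnDeriv_map_eq_one hX h₁) (lintegral_rnDeriv_map_eq_one hY h₂)
        (lintegral_rnDeriv_map_eq_one (hX.sub hY) h₄) (ρ := R)
        (hadd.map_eq.trans h₃.map_eq_withDensity))
      filter_upwards [ad, ax, ay, as, au, av] with z bd bx bY bs bu bv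
      simp only [Pi.add_apply, Pi.sub_apply, Real.exp_add, Real.exp_sub]
      rw [ENNReal.ofReal_div_of_pos (Real.exp_pos _), ENNReal.ofReal_div_of_pos (Real.exp_pos _),
        ENNReal.ofReal_div_of_pos (Real.exp_pos _), ENNReal.ofReal_mul (by positivity),
        ENNReal.ofReal_mul (by positivity), bd, bx, bY, bs, bu, bv]
      rfl)
  rw [integral_sub' ((((id.add iu).add iv).sub ix).sub iy) is,
    integral_sub' (((id.add iu).add iv).sub ix) iy, integral_sub' ((id.add iu).add iv) ix,
    integral_add' (id.add iu) iv, integral_add' id iu, ed, eu, ev, ex, ey, es] at key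
  linarith

end Entropy

/-- **Sum-difference inequality for mutual information.**
If `X, Y` are independent continuous random variables with all relevant differential
entropies existing and finite, then for every `α ∈ [0,1]`,
`α·I(X+Y;X) + (1-α)·I(X+Y;Y) ≤ (1+α)·I(X-Y;X) + (2-α)·I(X-Y;Y)`. -/
theorem sum_difference_mutualInfo
    {Ω : Type*} [MeasurableSpace Ω] (P : Measure Ω) [IsProbabilityMeasure P]
    (X Y : Ω → ℝ) (hX : Measurable X) (hY : Measurable Y)
    (hindep : IndepFun X Y P)
    (h1 : FiniteDent volume P X) (h2 : FiniteDent volume P Y)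
    (h3 : FiniteDent volume P (X + Y)) (h4 : FiniteDent volume P (X - Y))
    (h5 : FiniteDent volume P (fun ω => (X ω + Y ω, X ω)))
    (h6 : FiniteDent volume P (fun ω => (X ω + Y ω, Y ω)))
    (h7 : FiniteDent volume P (fun ω => (X ω - Y ω, X ω)))
    (h8 : FiniteDent volume P (fun ω => (X ω - Y ω, Y ω))) :
    ∀ α : ℝ, 0 ≤ α → α ≤ 1 →
      α * mutualInfo P (X + Y) X + (1 - α) * mutualInfo P (X + Y) Y ≤
        (1 + α) * mutualInfo P (X - Y) X + (2 - α) * mutualInfo P (X - Y) Y := by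
  intro α _ _
  have hshear₁ : MeasurePreserving (fun z : ℝ × ℝ => (z.1 + z.2, z.1)) volume volume :=
    Measure.measurePreserving_swap.comp (measurePreserving_prod_add volume volume)
  have hshear₂ : MeasurePreserving (fun z : ℝ × ℝ => (z.1 - z.2, z.1)) volume volume :=
    Measure.measurePreserving_swap.comp
      ((MeasurePreserving.id (volume : Measure ℝ)).skew_product
        (g := fun x y : ℝ => x - y) (by fun_prop)
        (Filter.Eventually.of_forall fun x => (Measure.measurePreserving_sub_left volume x).map_eq))
  have e₁ : dent volume P (fun ω => ((X + Y) ω, X ω)) = dent volume P X + dent volume P Y :=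
    dent_comp_pair_of_indepFun hX hY hindep h1 h2 hshear₁
      (S := fun z => (z.2, z.1 - z.2)) (by fun_prop) fun z => by simp
  have e₂ : dent volume P (fun ω => ((X + Y) ω, Y ω)) = dent volume P X + dent volume P Y :=
    dent_comp_pair_of_indepFun hX hY hindep h1 h2 (measurePreserving_add_prod volume volume)
      (S := fun z => (z.1 - z.2, z.2)) (by fun_prop) fun z => by simp
  have e₃ : dent volume P (fun ω => ((X - Y) ω, X ω)) = dent volume P X + dent volume P Y :=
    dent_comp_pair_of_indepFun hX hY hindep h1 h2 hshear₂
      (S := fun z => (z.2, z.2 - z.1)) (by fun_prop) fun z => by simp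
  have e₄ : dent volume P (fun ω => ((X - Y) ω, Y ω)) = dent volume P X + dent volume P Y :=
    dent_comp_pair_of_indepFun hX hY hindep h1 h2 (measurePreserving_sub_prod volume volume)
      (S := fun z => (z.1 + z.2, z.2)) (by fun_prop) fun z => by simp
  have key := dent_add_add_le_three_mul_dent_sub hX hY hindep h1 h2 h3 h4
  simp only [mutualInfo, e₁, e₂, e₃, e₄]
  linarith
end

section
/- Suppose X, Y are independent real-valued continuous random variables, let Z = X - Y, let (X1,Y1) and (X2,Y2) be two conditionally independent versions of (X,Y) given Z (i.e., each pair has the same joint distribution as (X,Y), each satisfies Xi - Yi = Z, and the two pairs are conditionally independent given Z), and let (X3,Y3) have the same distribution as (X,Y) and be independent of (X1,Y1,X2,Y2). If all relevant differential entropies exist and are finite, then h(X3+Y3) + h(X1) + h(Y2) ≤ h(X3-Y2) + h(X1-Y3) + h(Z). -/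
open MeasureTheory ProbabilityTheory

open scoped ENNReal

/-- Conditional independence of `U` and `V` given `Z`: the expectation of a function of
`(Z, U, V)` may be computed by integrating out `V` against its conditional law given `Z`. -/
lemma lintegral_comp_of_condIndepFun {Ω : Type*} [MeasurableSpace Ω] [StandardBorelSpace Ω]
    {P : Measure Ω} [IsFiniteMeasure P] {U V Z : Ω → ℝ} (hU : Measurable U) (hV : Measurable V)
    (hZ : Measurable Z)
    (h : CondIndepFun (MeasurableSpace.comap Z inferInstance) hZ.comap_le U V P)
    {Φ : ℝ → ℝ → ℝ → ℝ≥0∞} (hΦ : Measurable fun p : ℝ × ℝ × ℝ => Φ p.1 p.2.1 p.2.2) :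
    ∫⁻ ω, Φ (Z ω) (U ω) (V ω) ∂P =
      ∫⁻ ω, ∫⁻ v, Φ (Z ω) (U ω) v ∂(condDistrib V Z P (Z ω)) ∂P := by
  have hZU : Measurable fun ω => (Z ω, U ω) := hZ.prodMk hU
  have hΦ' : Measurable fun p : (ℝ × ℝ) × ℝ => Φ p.1.1 p.1.2 p.2 :=
    hΦ.comp (by fun_prop : Measurable fun p : (ℝ × ℝ) × ℝ => (p.1.1, p.1.2, p.2))
  have hae := (condIndepFun_iff_condDistrib_prod_ae_eq_prodMkRight hV hU hZ).1 h
  have hmap : P.map (fun ω => ((Z ω, U ω), V ω)) =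
      P.map (fun ω => (Z ω, U ω)) ⊗ₘ (condDistrib V Z P).prodMkRight ℝ := by
    rw [← Measure.compProd_congr hae, compProd_map_condDistrib hV.aemeasurable]
  calc ∫⁻ ω, Φ (Z ω) (U ω) (V ω) ∂P
      = ∫⁻ p, Φ p.1.1 p.1.2 p.2 ∂(P.map (fun ω => ((Z ω, U ω), V ω))) := by
        rw [lintegral_map hΦ' (hZU.prodMk hV)]
    _ = _ := by
        rw [hmap, Measure.lintegral_compProd hΦ', lintegral_map _ hZU]
        · simp [Kernel.prodMkRight_apply]
        · exact hΦ'.lintegral_kernel_prod_right'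

/-- Integrating a function of `(Z, V)` against the conditional law of `V` given `Z` and then
against the law of `Z`. -/
lemma lintegral_lintegral_condDistrib_map {Ω : Type*} [MeasurableSpace Ω]
    {P : Measure Ω} [IsFiniteMeasure P] {V Z : Ω → ℝ} (hV : Measurable V) (hZ : Measurable Z)
    {Φ : ℝ → ℝ → ℝ≥0∞} (hΦ : Measurable fun p : ℝ × ℝ => Φ p.1 p.2) :
    ∫⁻ z, ∫⁻ v, Φ z v ∂(condDistrib V Z P z) ∂(P.map Z) = ∫⁻ ω, Φ (Z ω) (V ω) ∂P := by
  rw [← Measure.lintegral_compProd (f := fun p : ℝ × ℝ => Φ p.1 p.2) hΦ,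
    compProd_map_condDistrib hV.aemeasurable, lintegral_map hΦ (hZ.prodMk hV)]

/-- The expectation of a function of `(X - Y, Y)` when `(X, Y)` has the product density
`f ⊗ g`. -/
lemma lintegral_comp_sub_eq {Ω : Type*} [MeasurableSpace Ω] {P : Measure Ω} {X Y : Ω → ℝ}
    (hX : Measurable X) (hY : Measurable Y) {f g : ℝ → ℝ≥0∞} (hf : Measurable f)
    (hg : Measurable g)
    (hXY : P.map (fun ω => (X ω, Y ω)) = (volume.withDensity f).prod (volume.withDensity g))
    {Φ : ℝ → ℝ → ℝ≥0∞} (hΦ : Measurable fun p : ℝ × ℝ => Φ p.1 p.2) :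
    ∫⁻ ω, Φ (X ω - Y ω) (Y ω) ∂P = ∫⁻ y, g y * ∫⁻ z, f (y + z) * Φ z y := by
  have hΨ : Measurable fun p : ℝ × ℝ => Φ (p.1 - p.2) p.2 :=
    hΦ.comp (by fun_prop : Measurable fun p : ℝ × ℝ => (p.1 - p.2, p.2))
  calc ∫⁻ ω, Φ (X ω - Y ω) (Y ω) ∂P
      = ∫⁻ p, Φ (p.1 - p.2) p.2 ∂(P.map (fun ω => (X ω, Y ω))) := by
        rw [lintegral_map hΨ (hX.prodMk hY)]
    _ = ∫⁻ y, g y * ∫⁻ x, f x * Φ (x - y) y := by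
        rw [hXY, lintegral_prod_symm' _ hΨ, lintegral_withDensity_eq_lintegral_mul _ hg
          hΨ.lintegral_prod_left']
        refine lintegral_congr fun y => ?_
        have hm : Measurable fun x => Φ (x - y) y :=
          hΨ.comp (by fun_prop : Measurable fun x : ℝ => (x, y))
        exact congrArg (g y * ·) (lintegral_withDensity_eq_lintegral_mul _ hf hm)
    _ = _ := by
        refine lintegral_congr fun y => ?_
        rw [← lintegral_add_left_eq_self (fun x => f x * Φ (x - y) y) y]
        simp

/-- The key estimate for the law of `(Z, Y₁, Y₂)`, where `(X₁, Y₁)` and `(X₂, Y₂)` are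
conditionally independent given `Z = X₁ - Y₁ = X₂ - Y₂` and each has density `f ⊗ g`. -/
lemma lintegral_condIndep_div_le {Ω : Type*} [MeasurableSpace Ω] [StandardBorelSpace Ω]
    {P : Measure Ω} [IsFiniteMeasure P] {X₁ Y₁ X₂ Y₂ Z : Ω → ℝ}
    (hX₁ : Measurable X₁) (hY₁ : Measurable Y₁) (hX₂ : Measurable X₂) (hY₂ : Measurable Y₂)
    (hZ : Measurable Z) (hZ₁ : ∀ ω, X₁ ω - Y₁ ω = Z ω) (hZ₂ : ∀ ω, X₂ ω - Y₂ ω = Z ω)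
    (hci : CondIndepFun (MeasurableSpace.comap Z inferInstance) hZ.comap_le Y₁ Y₂ P)
    {f g k : ℝ → ℝ≥0∞} (hf : Measurable f) (hg : Measurable g) (hk : Measurable k)
    (h₁ : P.map (fun ω => (X₁ ω, Y₁ ω)) = (volume.withDensity f).prod (volume.withDensity g))
    (h₂ : P.map (fun ω => (X₂ ω, Y₂ ω)) = (volume.withDensity f).prod (volume.withDensity g))
    (hlaw : P.map Z = volume.withDensity k)
    {G : ℝ → ℝ → ℝ → ℝ≥0∞} (hG : Measurable fun p : ℝ × ℝ × ℝ => G p.1 p.2.1 p.2.2) :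
    ∫⁻ ω, k (Z ω) * ((f (X₁ ω))⁻¹ * ((g (Y₂ ω))⁻¹ * G (Z ω) (Y₁ ω) (Y₂ ω))) ∂P ≤
      ∫⁻ y₁, g y₁ * ∫⁻ y₂, ∫⁻ z, f (y₂ + z) * G z y₁ y₂ := by
  have hX₁' : ∀ ω, X₁ ω = Y₁ ω + Z ω := fun ω => by rw [← hZ₁ ω]; ring
  have hgG : Measurable fun p : ℝ × ℝ × ℝ => (g p.2.2)⁻¹ * G p.1 p.2.1 p.2.2 :=
    (hg.comp (by fun_prop)).inv.mul hG
  have hκ : Measurable fun p : ℝ × ℝ =>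
      ∫⁻ v, (g v)⁻¹ * G p.1 p.2 v ∂(condDistrib Y₂ Z P p.1) := by
    have : Measurable fun p : (ℝ × ℝ) × ℝ => (g p.2)⁻¹ * G p.1.1 p.1.2 p.2 :=
      hgG.comp (by fun_prop : Measurable fun p : (ℝ × ℝ) × ℝ => (p.1.1, p.1.2, p.2))
    exact this.lintegral_kernel_prod_right' (κ := (condDistrib Y₂ Z P).prodMkRight ℝ)
  have hsec : ∀ y₁, Measurable fun p : ℝ × ℝ => (g p.2)⁻¹ * G p.1 y₁ p.2 := fun y₁ =>
    hgG.comp (by fun_prop : Measurable fun p : ℝ × ℝ => (p.1, y₁, p.2))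
  calc ∫⁻ ω, k (Z ω) * ((f (X₁ ω))⁻¹ * ((g (Y₂ ω))⁻¹ * G (Z ω) (Y₁ ω) (Y₂ ω))) ∂P
      = ∫⁻ ω, k (Z ω) * ((f (Y₁ ω + Z ω))⁻¹ *
          ((g (Y₂ ω))⁻¹ * G (Z ω) (Y₁ ω) (Y₂ ω))) ∂P := by simp_rw [hX₁']
    _ = ∫⁻ ω, ∫⁻ v, k (Z ω) * ((f (Y₁ ω + Z ω))⁻¹ * ((g v)⁻¹ * G (Z ω) (Y₁ ω) v))
          ∂(condDistrib Y₂ Z P (Z ω)) ∂P := by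
        refine lintegral_comp_of_condIndepFun
          (Φ := fun z y₁ y₂ => k z * ((f (y₁ + z))⁻¹ * ((g y₂)⁻¹ * G z y₁ y₂))) hY₁ hY₂ hZ hci ?_
        exact (hk.comp (by fun_prop)).mul ((hf.comp (by fun_prop)).inv.mul hgG)
    _ = ∫⁻ ω, k (X₁ ω - Y₁ ω) * ((f (Y₁ ω + (X₁ ω - Y₁ ω)))⁻¹ *
          ∫⁻ v, (g v)⁻¹ * G (X₁ ω - Y₁ ω) (Y₁ ω) v ∂(condDistrib Y₂ Z P (X₁ ω - Y₁ ω))) ∂P := by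
        refine lintegral_congr fun ω => ?_
        have hm : Measurable fun v => (g v)⁻¹ * G (Z ω) (Y₁ ω) v :=
          hgG.comp (by fun_prop : Measurable fun v : ℝ => (Z ω, Y₁ ω, v))
        rw [lintegral_const_mul _ (hm.const_mul _), lintegral_const_mul _ hm, hZ₁]
    _ = ∫⁻ y₁, g y₁ * ∫⁻ z, f (y₁ + z) * (k z * ((f (y₁ + z))⁻¹ *
          ∫⁻ v, (g v)⁻¹ * G z y₁ v ∂(condDistrib Y₂ Z P z))) := by
        refine lintegral_comp_sub_eq (Φ := fun z y₁ => k z * ((f (y₁ + z))⁻¹ *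
          ∫⁻ v, (g v)⁻¹ * G z y₁ v ∂(condDistrib Y₂ Z P z))) hX₁ hY₁ hf hg h₁ ?_
        exact (hk.comp measurable_fst).mul ((hf.comp (by fun_prop)).inv.mul hκ)
    _ ≤ ∫⁻ y₁, g y₁ * ∫⁻ z, k z * ∫⁻ v, (g v)⁻¹ * G z y₁ v ∂(condDistrib Y₂ Z P z) := by
        refine lintegral_mono fun y₁ => mul_le_mul_right (lintegral_mono fun z => ?_) _
        rw [mul_left_comm, ← mul_assoc (f _)]
        refine mul_le_mul_right ?_ _
        exact mul_le_of_le_one_left' (ENNReal.mul_inv_le_one _)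
    _ = ∫⁻ y₁, g y₁ * ∫⁻ ω, (g (Y₂ ω))⁻¹ * G (X₂ ω - Y₂ ω) y₁ (Y₂ ω) ∂P := by
        refine lintegral_congr fun y₁ => ?_
        simp_rw [hZ₂]
        rw [← lintegral_lintegral_condDistrib_map hY₂ hZ
          (Φ := fun z v => (g v)⁻¹ * G z y₁ v) (hsec y₁), hlaw,
          lintegral_withDensity_eq_lintegral_mul _ hk]
        · rfl
        · exact hκ.comp (by fun_prop : Measurable fun z : ℝ => (z, y₁))
    _ = ∫⁻ y₁, g y₁ * ∫⁻ y₂, g y₂ * ∫⁻ z, f (y₂ + z) * ((g y₂)⁻¹ * G z y₁ y₂) := by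
        refine lintegral_congr fun y₁ => ?_
        rw [lintegral_comp_sub_eq (Φ := fun z v => (g v)⁻¹ * G z y₁ v) hX₂ hY₂ hf hg h₂ (hsec y₁)]
    _ ≤ _ := by
        gcongr with y₁ y₂
        have hm : Measurable fun z => f (y₂ + z) * G z y₁ y₂ :=
          (hf.comp (by fun_prop)).mul
            (hG.comp (by fun_prop : Measurable fun z : ℝ => (z, y₁, y₂)))
        simp_rw [mul_left_comm (f _)]
        rw [lintegral_const_mul _ hm, ← mul_assoc]
        exact mul_le_of_le_one_left' (ENNReal.mul_inv_le_one _)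

/-- The correlation `r ↦ ∫ φ(x) ψ(x + r) dx` of two nonnegative functions on the line. -/
noncomputable def lcorr (φ ψ : ℝ → ℝ≥0∞) (r : ℝ) : ℝ≥0∞ := ∫⁻ x, φ x * ψ (x + r)

lemma measurable_lcorr {φ ψ : ℝ → ℝ≥0∞} (hφ : Measurable φ) (hψ : Measurable ψ) :
    Measurable (lcorr φ ψ) := by
  have : Measurable fun p : ℝ × ℝ => φ p.2 * ψ (p.2 + p.1) := by fun_prop
  exact this.lintegral_prod_right'

lemma lintegral_lcorr {φ ψ : ℝ → ℝ≥0∞} (hφ : Measurable φ) (hψ : Measurable ψ) :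
    ∫⁻ r, lcorr φ ψ r = (∫⁻ x, φ x) * ∫⁻ x, ψ x := by
  unfold lcorr
  have : Measurable fun p : ℝ × ℝ => φ p.2 * ψ (p.2 + p.1) := by fun_prop
  rw [lintegral_lintegral_swap this.aemeasurable, ← lintegral_mul_const _ hφ]
  refine lintegral_congr fun x => ?_
  rw [lintegral_const_mul _ (by fun_prop), lintegral_add_left_eq_self ψ x]

/-- The change of variables turning the integral over `(y₂, z)` into an iterated correlation. -/
lemma lintegral_lintegral_eq_lcorr {f a b : ℝ → ℝ≥0∞} (hf : Measurable f) (ha : Measurable a)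
    (hb : Measurable b) (x y c : ℝ) :
    ∫⁻ y₂, ∫⁻ z, f (y₂ + z) * (a (x - y₂) * b (c + z - y)) =
      lcorr f (lcorr a b) (c + -(x + y)) := by
  have h : ∀ y₂, ∫⁻ z, f (y₂ + z) * (a (x - y₂) * b (c + z - y)) =
      ∫⁻ w, f w * (a (x - y₂) * b (c + (w - y₂) - y)) := fun y₂ => by
    rw [← lintegral_add_left_eq_self (fun w => f w * (a (x - y₂) * b (c + (w - y₂) - y))) y₂]
    simp
  simp_rw [h]
  rw [lintegral_lintegral_swap (by fun_prop)]
  refine lintegral_congr fun w => ?_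
  rw [lintegral_const_mul _ (by fun_prop), lcorr,
    ← lintegral_sub_left_eq_self (fun u => a u * b (u + (w + (c + -(x + y))))) x]
  congr 2 with v
  congr 2
  ring

/-- Expectations of functions of two independent random variables as iterated expectations. -/
lemma lintegral_comp_of_indepFun {Ω α β : Type*} [MeasurableSpace Ω] [MeasurableSpace α]
    [MeasurableSpace β] {P : Measure Ω} [IsFiniteMeasure P] {U : Ω → α} {V : Ω → β}
    (hU : Measurable U) (hV : Measurable V) (h : IndepFun U V P) {F : α → β → ℝ≥0∞}
    (hF : Measurable fun p : α × β => F p.1 p.2) :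
    ∫⁻ ω, F (U ω) (V ω) ∂P = ∫⁻ ω, ∫⁻ ω', F (U ω) (V ω') ∂P ∂P := by
  calc ∫⁻ ω, F (U ω) (V ω) ∂P = ∫⁻ p, F p.1 p.2 ∂(P.map (fun ω => (U ω, V ω))) := by
        rw [lintegral_map hF (hU.prodMk hV)]
    _ = _ := by
        rw [(indepFun_iff_map_prod_eq_prod_map_map hU.aemeasurable hV.aemeasurable).1 h,
          lintegral_prod _ hF.aemeasurable, lintegral_map hF.lintegral_prod_right' hU]
        refine lintegral_congr fun ω => ?_
        exact lintegral_map (hF.comp measurable_prodMk_left) hV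

/-- The density ratio whose expected logarithm is the defect in the sum-difference inequality
has expectation at most one. -/
lemma lintegral_density_ratio_le_one {Ω : Type*} [MeasurableSpace Ω] [StandardBorelSpace Ω]
    {P : Measure Ω} [IsFiniteMeasure P] {X₁ Y₁ X₂ Y₂ X₃ Y₃ Z : Ω → ℝ}
    (hX₁ : Measurable X₁) (hY₁ : Measurable Y₁) (hX₂ : Measurable X₂) (hY₂ : Measurable Y₂)
    (hX₃ : Measurable X₃) (hY₃ : Measurable Y₃)
    (hZ : Measurable Z) (hZ₁ : ∀ ω, X₁ ω - Y₁ ω = Z ω) (hZ₂ : ∀ ω, X₂ ω - Y₂ ω = Z ω)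
    (hci : CondIndepFun (MeasurableSpace.comap Z inferInstance) hZ.comap_le Y₁ Y₂ P)
    (hind : IndepFun (fun ω => (X₃ ω, Y₃ ω)) (fun ω => (X₁ ω, Y₁ ω, X₂ ω, Y₂ ω)) P)
    {f g k s a b : ℝ → ℝ≥0∞} (hf : Measurable f) (hg : Measurable g) (hk : Measurable k)
    (hs : Measurable s) (ha : Measurable a) (hb : Measurable b)
    (h₁ : P.map (fun ω => (X₁ ω, Y₁ ω)) = (volume.withDensity f).prod (volume.withDensity g))
    (h₂ : P.map (fun ω => (X₂ ω, Y₂ ω)) = (volume.withDensity f).prod (volume.withDensity g))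
    (hlawZ : P.map Z = volume.withDensity k)
    (hlawS : P.map (X₃ + Y₃) = volume.withDensity s)
    (hf1 : ∫⁻ x, f x ≤ 1) (hg1 : ∫⁻ x, g x ≤ 1) (ha1 : ∫⁻ x, a x ≤ 1) (hb1 : ∫⁻ x, b x ≤ 1) :
    ∫⁻ ω, (s ((X₃ + Y₃) ω))⁻¹ * (k (Z ω) * ((f (X₁ ω))⁻¹ * ((g (Y₂ ω))⁻¹ *
      (a ((X₃ - Y₂) ω) * b ((X₁ - Y₃) ω))))) ∂P ≤ 1 := by
  have hX₁' : ∀ ω, X₁ ω = Y₁ ω + Z ω := fun ω => by rw [← hZ₁ ω]; ring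
  have hm₂ := measurable_lcorr hf (measurable_lcorr ha hb)
  have hm := measurable_lcorr hg hm₂
  have hinner : ∀ x y : ℝ, ∫⁻ ω, k (Z ω) * ((f (X₁ ω))⁻¹ * ((g (Y₂ ω))⁻¹ *
      (a (x - Y₂ ω) * b (X₁ ω - y)))) ∂P ≤ lcorr g (lcorr f (lcorr a b)) (-(x + y)) := by
    intro x y
    have := lintegral_condIndep_div_le hX₁ hY₁ hX₂ hY₂ hZ hZ₁ hZ₂ hci hf hg hk h₁ h₂ hlawZ
      (G := fun z y₁ y₂ => a (x - y₂) * b (y₁ + z - y)) (by fun_prop)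
    simp_rw [← hX₁', lintegral_lintegral_eq_lcorr hf ha hb] at this
    exact this
  calc ∫⁻ ω, (s ((X₃ + Y₃) ω))⁻¹ * (k (Z ω) * ((f (X₁ ω))⁻¹ * ((g (Y₂ ω))⁻¹ *
        (a ((X₃ - Y₂) ω) * b ((X₁ - Y₃) ω))))) ∂P
      = ∫⁻ ω, ∫⁻ ω', (s (X₃ ω + Y₃ ω))⁻¹ * (k (Z ω') * ((f (X₁ ω'))⁻¹ * ((g (Y₂ ω'))⁻¹ *
        (a (X₃ ω - Y₂ ω') * b (X₁ ω' - Y₃ ω))))) ∂P ∂P := by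
        simp_rw [← hZ₁]
        exact lintegral_comp_of_indepFun (hX₃.prodMk hY₃)
          (hX₁.prodMk (hY₁.prodMk (hX₂.prodMk hY₂))) hind
          (F := fun p q => (s (p.1 + p.2))⁻¹ * (k (q.1 - q.2.1) * ((f q.1)⁻¹ *
            ((g q.2.2.2)⁻¹ * (a (p.1 - q.2.2.2) * b (q.1 - p.2)))))) (by fun_prop)
    _ ≤ ∫⁻ ω, (s ((X₃ + Y₃) ω))⁻¹ *
          lcorr g (lcorr f (lcorr a b)) (-((X₃ + Y₃) ω)) ∂P := by
        refine lintegral_mono fun ω => ?_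
        rw [lintegral_const_mul _ (by fun_prop)]
        exact mul_le_mul_right (hinner _ _) _
    _ = ∫⁻ t, s t * ((s t)⁻¹ * lcorr g (lcorr f (lcorr a b)) (-t)) := by
        have hm' : Measurable fun t => (s t)⁻¹ * lcorr g (lcorr f (lcorr a b)) (-t) := by fun_prop
        rw [← lintegral_map hm' (hX₃.add hY₃), hlawS,
          lintegral_withDensity_eq_lintegral_mul _ hs hm']
        rfl
    _ ≤ ∫⁻ t, lcorr g (lcorr f (lcorr a b)) (-t) := by
        gcongr with t
        rw [← mul_assoc]
        exact mul_le_of_le_one_left' (ENNReal.mul_inv_le_one _)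
    _ = (∫⁻ x, g x) * ((∫⁻ x, f x) * ((∫⁻ x, a x) * ∫⁻ x, b x)) := by
        rw [lintegral_neg_eq_self (fun t => lcorr g (lcorr f (lcorr a b)) t),
          lintegral_lcorr hg hm₂, lintegral_lcorr hf (measurable_lcorr ha hb),
          lintegral_lcorr ha hb]
    _ ≤ 1 := mul_le_one' hg1 (mul_le_one' hf1 (mul_le_one' ha1 hb1))

section FiniteDent

variable {Ω : Type*} [MeasurableSpace Ω] {P : Measure Ω} {X : Ω → ℝ}

lemma FiniteDent.map_eq_withDensity_s10 [IsFiniteMeasure P] (h : FiniteDent volume P X) :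
    P.map X = volume.withDensity ((P.map X).rnDeriv volume) :=
  (Measure.withDensity_rnDeriv_eq _ _ h.1).symm

lemma FiniteDent.toReal_rnDeriv_pos [IsFiniteMeasure P] (hX : Measurable X)
    (h : FiniteDent volume P X) :
    ∀ᵐ ω ∂P, 0 < ((P.map X).rnDeriv volume (X ω)).toReal := by
  refine ae_of_ae_map hX.aemeasurable
    (p := fun x => 0 < ((P.map X).rnDeriv volume x).toReal) ?_
  filter_upwards [Measure.rnDeriv_pos h.1, h.1.ae_le (Measure.rnDeriv_lt_top (P.map X) volume)]
    with x hx hx' using ENNReal.toReal_pos hx.ne' hx'.ne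

lemma FiniteDent.integrable_log_rnDeriv (hX : Measurable X) (h : FiniteDent volume P X) :
    Integrable (fun ω => Real.log ((P.map X).rnDeriv volume (X ω)).toReal) P :=
  h.2.comp_measurable hX

lemma dent_eq_neg_integral (hX : Measurable X) :
    dent volume P X = -∫ ω, Real.log ((P.map X).rnDeriv volume (X ω)).toReal ∂P := by
  rw [dent, integral_map hX.aemeasurable]
  exact (Measure.measurable_rnDeriv _ _).ennreal_toReal.log.aestronglyMeasurable

lemma lintegral_rnDeriv_map_le_one [IsProbabilityMeasure P] (hX : Measurable X) :
    ∫⁻ x, (P.map X).rnDeriv volume x ≤ 1 := by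
  have := Measure.isProbabilityMeasure_map (μ := P) hX.aemeasurable
  exact Measure.lintegral_rnDeriv_le.trans_eq measure_univ

end FiniteDent

lemma log_add_sub_log_add_le {s f g a b k : ℝ} (hs : 0 < s) (hf : 0 < f) (hg : 0 < g)
    (ha : 0 < a) (hb : 0 < b) (hk : 0 < k) :
    Real.log a + Real.log b + Real.log k - (Real.log s + Real.log f + Real.log g) ≤
      s⁻¹ * (k * (f⁻¹ * (g⁻¹ * (a * b)))) - 1 := by
  refine le_trans (le_of_eq ?_) (Real.log_le_sub_one_of_pos (by positivity))
  rw [Real.log_mul (by positivity) (by positivity), Real.log_mul (by positivity) (by positivity),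
    Real.log_mul (by positivity) (by positivity), Real.log_mul (by positivity) (by positivity),
    Real.log_mul (by positivity) (by positivity), Real.log_inv, Real.log_inv, Real.log_inv]
  ring

/-- Suppose `X, Y` are independent continuous random variables, `Z = X - Y`, and
`(X₁,Y₁)`, `(X₂,Y₂)` are two conditionally independent versions of `(X,Y)` given `Z`
(each pair is distributed as `(X,Y)`, satisfies `Xᵢ - Yᵢ = Z`, and the two pairs are
conditionally independent given `Z`).  If `(X₃,Y₃)` is distributed as `(X,Y)` and
independent of `(X₁,Y₁,X₂,Y₂)`, and all relevant differential entropies exist and are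
finite, then `h(X₃+Y₃) + h(X₁) + h(Y₂) ≤ h(X₃-Y₂) + h(X₁-Y₃) + h(Z)`. -/
theorem cond_indep_sum_diff_ineq
    {Ω₀ : Type*} [MeasurableSpace Ω₀] (P₀ : Measure Ω₀) [IsProbabilityMeasure P₀]
    {Ω : Type*} [MeasurableSpace Ω] [StandardBorelSpace Ω]
    (P : Measure Ω) [IsProbabilityMeasure P]
    (X Y : Ω₀ → ℝ) (hX : Measurable X) (hY : Measurable Y) (hindep : IndepFun X Y P₀)
    (X₁ Y₁ X₂ Y₂ X₃ Y₃ Z : Ω → ℝ)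
    (hX₁ : Measurable X₁) (hY₁ : Measurable Y₁) (hX₂ : Measurable X₂)
    (hY₂ : Measurable Y₂) (hX₃ : Measurable X₃) (hY₃ : Measurable Y₃)
    (hZ : Measurable Z)
    (hZ₁ : ∀ ω, X₁ ω - Y₁ ω = Z ω) (hZ₂ : ∀ ω, X₂ ω - Y₂ ω = Z ω)
    (hid₁ : IdentDistrib (fun ω => (X₁ ω, Y₁ ω)) (fun ω => (X ω, Y ω)) P P₀)
    (hid₂ : IdentDistrib (fun ω => (X₂ ω, Y₂ ω)) (fun ω => (X ω, Y ω)) P P₀)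
    (hid₃ : IdentDistrib (fun ω => (X₃ ω, Y₃ ω)) (fun ω => (X ω, Y ω)) P P₀)
    (hci : CondIndepFun (MeasurableSpace.comap Z inferInstance) hZ.comap_le
      (fun ω => (X₁ ω, Y₁ ω)) (fun ω => (X₂ ω, Y₂ ω)) P)
    (hind₃ : IndepFun (fun ω => (X₃ ω, Y₃ ω)) (fun ω => (X₁ ω, Y₁ ω, X₂ ω, Y₂ ω)) P)
    (h1 : FiniteDent volume P (X₃ + Y₃)) (h2 : FiniteDent volume P X₁)
    (h3 : FiniteDent volume P Y₂) (h4 : FiniteDent volume P (X₃ - Y₂))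
    (h5 : FiniteDent volume P (X₁ - Y₃)) (h6 : FiniteDent volume P Z) :
    dent volume P (X₃ + Y₃) + dent volume P X₁ + dent volume P Y₂ ≤
      dent volume P (X₃ - Y₂) + dent volume P (X₁ - Y₃) + dent volume P Z := by
  have hS : Measurable (X₃ + Y₃) := hX₃.add hY₃
  have hA : Measurable (X₃ - Y₂) := hX₃.sub hY₂
  have hB : Measurable (X₁ - Y₃) := hX₁.sub hY₃
  have hX₁law : P₀.map X = P.map X₁ := (hid₁.comp measurable_fst).map_eq.symm
  have hY₂law : P₀.map Y = P.map Y₂ := (hid₂.comp measurable_snd).map_eq.symm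
  have hprod : P₀.map (fun ω => (X ω, Y ω)) =
      (volume.withDensity ((P.map X₁).rnDeriv volume)).prod
        (volume.withDensity ((P.map Y₂).rnDeriv volume)) := by
    rw [(indepFun_iff_map_prod_eq_prod_map_map hX.aemeasurable hY.aemeasurable).1 hindep,
      hX₁law, hY₂law, ← h2.map_eq_withDensity_s10, ← h3.map_eq_withDensity_s10]
  have hratio := lintegral_density_ratio_le_one hX₁ hY₁ hX₂ hY₂ hX₃ hY₃ hZ hZ₁ hZ₂
    (hci.comp measurable_snd measurable_snd) hind₃ (Measure.measurable_rnDeriv _ _)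
    (Measure.measurable_rnDeriv _ _) (Measure.measurable_rnDeriv _ _)
    (Measure.measurable_rnDeriv _ _) (Measure.measurable_rnDeriv _ _)
    (Measure.measurable_rnDeriv _ _) (hid₁.map_eq.trans hprod) (hid₂.map_eq.trans hprod)
    h6.map_eq_withDensity_s10 h1.map_eq_withDensity_s10 (lintegral_rnDeriv_map_le_one hX₁)
    (lintegral_rnDeriv_map_le_one hY₂) (lintegral_rnDeriv_map_le_one (P := P) hA)
    (lintegral_rnDeriv_map_le_one (P := P) hB)
  set R : Ω → ℝ≥0∞ := fun ω => ((P.map (X₃ + Y₃)).rnDeriv volume ((X₃ + Y₃) ω))⁻¹ *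
    ((P.map Z).rnDeriv volume (Z ω) * (((P.map X₁).rnDeriv volume (X₁ ω))⁻¹ *
      (((P.map Y₂).rnDeriv volume (Y₂ ω))⁻¹ *
        ((P.map (X₃ - Y₂)).rnDeriv volume ((X₃ - Y₂) ω) *
          (P.map (X₁ - Y₃)).rnDeriv volume ((X₁ - Y₃) ω))))) with hR
  have hRm : Measurable R := by
    have hm : ∀ (ν : Measure ℝ) {W : Ω → ℝ}, Measurable W →
        Measurable fun ω => ν.rnDeriv volume (W ω) :=
      fun ν _ hW => (Measure.measurable_rnDeriv ν volume).comp hW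
    exact (hm _ hS).inv.mul ((hm _ hZ).mul ((hm _ hX₁).inv.mul ((hm _ hY₂).inv.mul
      ((hm _ hA).mul (hm _ hB)))))
  have hRint : Integrable (fun ω => (R ω).toReal) P :=
    integrable_toReal_of_lintegral_ne_top hRm.aemeasurable
      (hratio.trans_lt ENNReal.one_lt_top).ne
  have hRle : ∫ ω, (R ω).toReal ∂P ≤ 1 := by
    rw [integral_toReal hRm.aemeasurable
      (ae_lt_top hRm (hratio.trans_lt ENNReal.one_lt_top).ne)]
    exact ENNReal.toReal_le_of_le_ofReal zero_le_one (by simpa using hratio)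
  have i1 := h1.integrable_log_rnDeriv hS
  have i2 := h2.integrable_log_rnDeriv hX₁
  have i3 := h3.integrable_log_rnDeriv hY₂
  have i4 := h4.integrable_log_rnDeriv hA
  have i5 := h5.integrable_log_rnDeriv hB
  have i6 := h6.integrable_log_rnDeriv hZ
  have hmono := integral_mono_ae (((i4.add i5).add i6).sub ((i1.add i2).add i3))
    (hRint.sub (integrable_const 1)) (by
      filter_upwards [h1.toReal_rnDeriv_pos hS, h2.toReal_rnDeriv_pos hX₁,
        h3.toReal_rnDeriv_pos hY₂, h4.toReal_rnDeriv_pos hA, h5.toReal_rnDeriv_pos hB,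
        h6.toReal_rnDeriv_pos hZ] with ω p1 p2 p3 p4 p5 p6
      refine (log_add_sub_log_add_le p1 p2 p3 p4 p5 p6).trans_eq ?_
      simp only [Pi.sub_apply, hR, ENNReal.toReal_mul, ENNReal.toReal_inv])
  rw [integral_sub' ((i4.add i5).add i6) ((i1.add i2).add i3), integral_add' (i4.add i5) i6,
    integral_add' i4 i5, integral_add' (i1.add i2) i3, integral_add' i1 i2,
    integral_sub' hRint (integrable_const 1)] at hmono
  simp only [integral_const, probReal_univ, smul_eq_mul, mul_one] at hmono
  rw [dent_eq_neg_integral hS, dent_eq_neg_integral hX₁, dent_eq_neg_integral hY₂,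
    dent_eq_neg_integral hA, dent_eq_neg_integral hB, dent_eq_neg_integral hZ]
  linarith
end

section
/- Weak Balog-Szemerédi-Gowers lemma for differential entropy: Suppose X, Y are real-valued continuous random variables with all relevant differential entropies existing and finite, satisfying h(X,Y) ≥ h(X) + h(Y) - log K and h(X+Y) ≤ (1/2)h(X) + (1/2)h(Y) + log K for some K ≥ 1. Let X1, X2 be conditionally independent versions of X given Y (i.e., (X1,Y) and (X2,Y) each have the same joint distribution as (X,Y), and X1, X2 are conditionally independent given Y). Then h(X1 - X2 | Y) ≤ h(X) + 4 log K. -/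
open MeasureTheory ProbabilityTheory

/-- The conditional differential entropy `h(U|V) = h(U,V) - h(V)`. -/
noncomputable def condDent {Ω E F : Type*} [MeasurableSpace Ω] [MeasureSpace E] [MeasureSpace F]
    (P : Measure Ω) (U : Ω → E) (V : Ω → F) : ℝ :=
  dent volume P (fun ω => (U ω, V ω)) - dent volume P V

open scoped ENNReal

section Density

variable {Ω E F : Type*} [MeasurableSpace Ω] [MeasurableSpace E] [MeasurableSpace F]
  {P : Measure Ω} {μ : Measure E} {ν : Measure F}

/-- If `Z` has density `p`, then `E[q(Z) / p(Z)] ≤ ∫ q`. -/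
lemma lintegral_div_density_le {Z : Ω → E} (hZ : Measurable Z) {p q : E → ℝ≥0∞}
    (hp : Measurable p) (hq : Measurable q) (hpZ : P.map Z = μ.withDensity p) :
    ∫⁻ ω, q (Z ω) / p (Z ω) ∂P ≤ ∫⁻ x, q x ∂μ := by
  rw [← lintegral_map (f := fun x => q x / p x) (by fun_prop) hZ, hpZ,
    lintegral_withDensity_eq_lintegral_mul _ hp (by fun_prop)]
  exact lintegral_mono fun x => ENNReal.mul_div_le

lemma lintegral_density_eq_one [IsProbabilityMeasure P] {Z : Ω → E} (hZ : Measurable Z)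
    {p : E → ℝ≥0∞} (hpZ : P.map Z = μ.withDensity p) : ∫⁻ x, p x ∂μ = 1 := by
  have := Measure.isProbabilityMeasure_map (μ := P) hZ.aemeasurable
  rw [← setLIntegral_univ, ← withDensity_apply _ MeasurableSet.univ, ← hpZ, measure_univ]

/-- A density is almost surely positive and finite along its random variable. -/
lemma ae_density_ne_zero_and_ne_top [IsProbabilityMeasure P] {Z : Ω → E} (hZ : Measurable Z)
    {p : E → ℝ≥0∞} (hp : Measurable p) (hpZ : P.map Z = μ.withDensity p) :
    ∀ᵐ ω ∂P, p (Z ω) ≠ 0 ∧ p (Z ω) ≠ ∞ := by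
  refine ae_of_ae_map (p := fun x => p x ≠ 0 ∧ p x ≠ ∞) hZ.aemeasurable ?_
  have h1 : ∫⁻ x, p x ∂μ ≠ ∞ := by simp [lintegral_density_eq_one hZ hpZ]
  rw [hpZ, ae_withDensity_iff hp]
  filter_upwards [ae_lt_top hp h1] with x hx h0 using ⟨h0, hx.ne⟩

/-- The marginal density. -/
lemma map_eq_withDensity_lintegral [SFinite μ] [SFinite ν] {U : Ω → E} {V : Ω → F}
    (hU : Measurable U) (hV : Measurable V) {p : E × F → ℝ≥0∞} (hp : Measurable p)
    (h : P.map (fun ω => (U ω, V ω)) = (μ.prod ν).withDensity p) :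
    P.map U = μ.withDensity fun u => ∫⁻ v, p (u, v) ∂ν := by
  refine Measure.ext_of_lintegral _ fun g hg => ?_
  have h1 : ∫⁻ u, g u ∂(P.map U) = ∫⁻ z, g z.1 ∂(P.map fun ω => (U ω, V ω)) := by
    rw [lintegral_map hg hU, lintegral_map (by fun_prop) (by fun_prop)]
  rw [h1, h, lintegral_withDensity_eq_lintegral_mul _ hp (by fun_prop),
    lintegral_withDensity_eq_lintegral_mul _ hp.lintegral_prod_right' hg,
    lintegral_prod _ (by fun_prop)]
  refine lintegral_congr fun u => ?_
  simp only [Pi.mul_apply]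
  rw [lintegral_mul_const _ (by fun_prop)]

/-- If `(V, U)` has density `p`, then dividing `p` by the density of `V` gives a version of the
conditional distribution of `U` given `V`. -/
lemma condDistrib_ae_eq_withDensity [IsProbabilityMeasure P] [StandardBorelSpace F] [Nonempty F]
    [SFinite μ] [SFinite ν] {V : Ω → E} {U : Ω → F} (hV : Measurable V) (hU : Measurable U)
    {p : E × F → ℝ≥0∞} (hp : Measurable p)
    (h : P.map (fun ω => (V ω, U ω)) = (μ.prod ν).withDensity p) :
    ∀ᵐ v ∂(P.map V), condDistrib U V P v =
      ν.withDensity fun u => p (v, u) / ∫⁻ w, p (v, w) ∂ν := by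
  have hm : Measurable fun v => ∫⁻ w, p (v, w) ∂ν := hp.lintegral_prod_right'
  have hρ : Measurable (Function.uncurry fun v u => p (v, u) / ∫⁻ w, p (v, w) ∂ν) := by
    unfold Function.uncurry
    exact hp.div (hm.comp measurable_fst)
  have happly := Kernel.withDensity_apply (Kernel.const E ν) hρ
  have : IsFiniteKernel ((Kernel.const E ν).withDensity
      fun v u => p (v, u) / ∫⁻ w, p (v, w) ∂ν) := by
    refine ⟨1, ENNReal.one_lt_top, fun v => ?_⟩
    rw [happly, Kernel.const_apply, withDensity_apply _ MeasurableSet.univ, setLIntegral_univ]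
    simp only [div_eq_mul_inv]
    rw [lintegral_mul_const _ (by fun_prop)]
    exact ENNReal.mul_inv_le_one _
  have hV' := map_eq_withDensity_lintegral hV hU hp h
  have key := condDistrib_ae_eq_of_measure_eq_compProd (μ := P) V hU.aemeasurable
    (κ := (Kernel.const E ν).withDensity fun v u => p (v, u) / ∫⁻ w, p (v, w) ∂ν) ?_
  · filter_upwards [key] with v hv
    rw [hv, happly, Kernel.const_apply]
  refine Measure.ext_of_lintegral _ fun g hg => ?_
  have := Measure.isProbabilityMeasure_map (μ := P) hV.aemeasurable
  rw [Measure.lintegral_compProd hg, h, hV', lintegral_withDensity_eq_lintegral_mul _ hp hg,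
    lintegral_withDensity_eq_lintegral_mul _ hm hg.lintegral_kernel_prod_right',
    lintegral_prod _ (by fun_prop)]
  have hfin : ∀ᵐ v ∂μ, ∫⁻ w, p (v, w) ∂ν < ∞ :=
    ae_lt_top hm (by simp [lintegral_density_eq_one hV hV'])
  refine lintegral_congr_ae ?_
  filter_upwards [hfin] with v hv
  simp only [Pi.mul_apply]
  rw [Kernel.lintegral_withDensity _ hρ _ (by fun_prop), Kernel.const_apply,
    ← lintegral_const_mul _ (by fun_prop)]
  by_cases h0 : ∫⁻ w, p (v, w) ∂ν = 0
  · have := (lintegral_eq_zero_iff (by fun_prop)).1 h0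
    refine lintegral_congr_ae ?_
    filter_upwards [this] with u hu
    simp [h0, show p (v, u) = 0 from hu]
  · refine lintegral_congr fun u => ?_
    rw [← mul_assoc, ENNReal.mul_div_cancel h0 hv.ne]

/-- The joint density of `(V, U₁, U₂)` when `U₁, U₂` are conditionally independent versions of
the same variable given `V`. -/
lemma map_eq_withDensity_of_condIndepFun [StandardBorelSpace Ω] [IsProbabilityMeasure P]
    [StandardBorelSpace F] [Nonempty F] [SFinite μ] [SFinite ν]
    {V : Ω → E} {U₁ U₂ : Ω → F} (hV : Measurable V)
    (hU₁ : Measurable U₁) (hU₂ : Measurable U₂) {p : E × F → ℝ≥0∞} (hp : Measurable p)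
    (h₁ : P.map (fun ω => (V ω, U₁ ω)) = (μ.prod ν).withDensity p)
    (h₂ : P.map (fun ω => (V ω, U₂ ω)) = (μ.prod ν).withDensity p)
    (hci : CondIndepFun (MeasurableSpace.comap V inferInstance) hV.comap_le U₁ U₂ P) :
    P.map (fun ω => (V ω, U₁ ω, U₂ ω)) = (μ.prod (ν.prod ν)).withDensity fun z =>
      (∫⁻ w, p (z.1, w) ∂ν) * ((p (z.1, z.2.1) / ∫⁻ w, p (z.1, w) ∂ν) *
        (p (z.1, z.2.2) / ∫⁻ w, p (z.1, w) ∂ν)) := by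
  have hm : Measurable fun v => ∫⁻ w, p (v, w) ∂ν := hp.lintegral_prod_right'
  have hV' := map_eq_withDensity_lintegral hV hU₁ hp h₁
  have := Measure.isProbabilityMeasure_map (μ := P) hV.aemeasurable
  rw [(condIndepFun_iff_map_prod_eq_prod_condDistrib_prod_condDistrib hU₁ hU₂ hV).1 hci,
    ← Measure.compProd_eq_comp_prod]
  refine Measure.ext_of_lintegral _ fun g hg => ?_
  have hm' : Measurable fun z : E × F × F => ∫⁻ w, p (z.1, w) ∂ν := hm.comp measurable_fst
  have hρ : Measurable fun z : E × F × F =>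
      (p (z.1, z.2.1) / ∫⁻ w, p (z.1, w) ∂ν) * (p (z.1, z.2.2) / ∫⁻ w, p (z.1, w) ∂ν) := by
    exact ((hp.comp (by fun_prop)).div hm').mul ((hp.comp (by fun_prop)).div hm')
  have hdens : Measurable fun z : E × F × F => (∫⁻ w, p (z.1, w) ∂ν) *
      ((p (z.1, z.2.1) / ∫⁻ w, p (z.1, w) ∂ν) * (p (z.1, z.2.2) / ∫⁻ w, p (z.1, w) ∂ν)) :=
    hm'.mul hρ
  have hcond : ∀ᵐ v ∂(P.map V), ∫⁻ x, g (v, x)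
        ∂((condDistrib U₁ V P ×ₖ condDistrib U₂ V P) v) =
      ∫⁻ x, ((p (v, x.1) / ∫⁻ w, p (v, w) ∂ν) * (p (v, x.2) / ∫⁻ w, p (v, w) ∂ν)) * g (v, x)
        ∂(ν.prod ν) := by
    filter_upwards [condDistrib_ae_eq_withDensity hV hU₁ hp h₁,
      condDistrib_ae_eq_withDensity hV hU₂ hp h₂] with v e₁ e₂
    rw [Kernel.prod_apply, e₁, e₂, prod_withDensity (by fun_prop) (by fun_prop),
      lintegral_withDensity_eq_lintegral_mul _ (by fun_prop) (by fun_prop)]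
    rfl
  have hg' : Measurable fun v =>
      ∫⁻ x, ((p (v, x.1) / ∫⁻ w, p (v, w) ∂ν) * (p (v, x.2) / ∫⁻ w, p (v, w) ∂ν)) * g (v, x)
        ∂(ν.prod ν) := (hρ.mul hg).lintegral_prod_right'
  rw [Measure.lintegral_compProd hg, lintegral_congr_ae hcond, hV',
    lintegral_withDensity_eq_lintegral_mul _ hm hg',
    lintegral_withDensity_eq_lintegral_mul _ hdens hg,
    lintegral_prod _ (hdens.mul hg).aemeasurable]
  refine lintegral_congr fun v => ?_
  simp only [Pi.mul_apply]
  rw [← lintegral_const_mul _ (by fun_prop)]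
  simp only [mul_assoc]

lemma map_swap_eq_withDensity [SFinite μ] [SFinite ν] {U : Ω → E} {V : Ω → F}
    (hU : Measurable U) (hV : Measurable V) {p : E × F → ℝ≥0∞} (hp : Measurable p)
    (h : P.map (fun ω => (U ω, V ω)) = (μ.prod ν).withDensity p) :
    P.map (fun ω => (V ω, U ω)) = (ν.prod μ).withDensity fun z => p (z.2, z.1) := by
  refine Measure.ext_of_lintegral _ fun g hg => ?_
  have h1 : ∫⁻ z, g z ∂(P.map fun ω => (V ω, U ω)) =
      ∫⁻ z, g z.swap ∂(P.map fun ω => (U ω, V ω)) := by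
    rw [lintegral_map hg (by fun_prop), lintegral_map (by fun_prop) (by fun_prop)]
    rfl
  rw [h1, h, lintegral_withDensity_eq_lintegral_mul _ hp (by fun_prop),
    lintegral_withDensity_eq_lintegral_mul _ (by fun_prop) hg, ← lintegral_prod_swap]
  rfl

lemma ae_eq_of_map_eq_withDensity [SigmaFinite μ] [IsProbabilityMeasure P] {Z : Ω → E}
    (hZ : Measurable Z) {p : E → ℝ≥0∞} (hp : Measurable p) (hpZ : P.map Z = μ.withDensity p) :
    ∀ᵐ ω ∂P, (P.map Z).rnDeriv μ (Z ω) = p (Z ω) := by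
  refine ae_of_ae_map (p := fun x => (P.map Z).rnDeriv μ x = p x) hZ.aemeasurable ?_
  have hac : P.map Z ≪ μ := hpZ ▸ withDensity_absolutelyContinuous _ _
  refine hac.ae_le ?_
  rw [hpZ]
  exact Measure.rnDeriv_withDensity μ hp

lemma FiniteDent.map_eq [SigmaFinite μ] [IsProbabilityMeasure P] {Z : Ω → E}
    (h : FiniteDent μ P Z) : P.map Z = μ.withDensity ((P.map Z).rnDeriv μ) :=
  (Measure.withDensity_rnDeriv_eq _ _ h.1).symm

lemma FiniteDent.integrable {Z Z' : Ω → E} (hZ' : Measurable Z') (e : P.map Z' = P.map Z)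
    (h : FiniteDent μ P Z) :
    Integrable (fun ω => Real.log ((P.map Z).rnDeriv μ (Z' ω)).toReal) P := by
  have h2 := h.2
  nth_rewrite 2 [← e] at h2
  exact h2.comp_measurable hZ'

lemma dent_eq {Z Z' : Ω → E} (hZ' : Measurable Z') (e : P.map Z' = P.map Z) :
    dent μ P Z = -∫ ω, Real.log ((P.map Z).rnDeriv μ (Z' ω)).toReal ∂P := by
  rw [dent, ← integral_map (f := fun x => Real.log ((P.map Z).rnDeriv μ x).toReal)
    hZ'.aemeasurable, e]
  exact (Measure.measurable_rnDeriv _ _).ennreal_toReal.log.aestronglyMeasurable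

end Density

/-- The map `(y, x₁, x₂) ↦ (x₁ - x₂, x₂ + y)` preserves null sets under preimages. -/
lemma quasiMeasurePreserving_sub_add :
    Measure.QuasiMeasurePreserving (fun z : ℝ × ℝ × ℝ => (z.2.1 - z.2.2, z.2.2 + z.1)) := by
  refine QuasiMeasurePreserving.prod_of_right (by fun_prop) (.of_forall fun y => ?_)
  exact (((MeasurePreserving.id volume).prod
    (measurePreserving_add_right (volume : Measure ℝ) y)).comp
      (measurePreserving_sub_prod volume volume)).quasiMeasurePreserving

/-- The tangent-line bound `log r ≤ r - 1` applied to three ratios whose product is the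
exponential of the entropy combination. -/
lemma log_combination_ge {c g b m f₁ f₂ u₁ u₂ s₁ s₂ : ℝ≥0∞}
    (hc : c ≠ 0 ∧ c ≠ ∞) (hg : g ≠ 0 ∧ g ≠ ∞) (hb : b ≠ 0 ∧ b ≠ ∞) (hm : m ≠ 0 ∧ m ≠ ∞)
    (hf₁ : f₁ ≠ 0 ∧ f₁ ≠ ∞) (hf₂ : f₂ ≠ 0 ∧ f₂ ≠ ∞) (hu₁ : u₁ ≠ 0 ∧ u₁ ≠ ∞)
    (hu₂ : u₂ ≠ 0 ∧ u₂ ≠ ∞) (hs₁ : s₁ ≠ 0 ∧ s₁ ≠ ∞) (hs₂ : s₂ ≠ 0 ∧ s₂ ≠ ∞) :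
    3 - (c * m / g).toReal - (s₁ * s₂ / b).toReal
        - ((u₁ * u₂) * (b / c) / (m * ((f₁ / m) * (f₂ / m)))).toReal ≤
      Real.log g.toReal + Real.log f₁.toReal + Real.log f₂.toReal - 2 * Real.log m.toReal
        - Real.log u₁.toReal - Real.log u₂.toReal - Real.log s₁.toReal - Real.log s₂.toReal := by
  simp only [ENNReal.toReal_mul, ENNReal.toReal_div]
  have pos {x : ℝ≥0∞} (h : x ≠ 0 ∧ x ≠ ∞) : 0 < x.toReal := ENNReal.toReal_pos h.1 h.2
  have hc := pos hc
  have hg := pos hg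
  have hb := pos hb
  have hm := pos hm
  have hf₁ := pos hf₁
  have hf₂ := pos hf₂
  have hu₁ := pos hu₁
  have hu₂ := pos hu₂
  have hs₁ := pos hs₁
  have hs₂ := pos hs₂
  have l₁ := Real.log_le_sub_one_of_pos (x := c.toReal * m.toReal / g.toReal) (by positivity)
  have l₂ := Real.log_le_sub_one_of_pos (x := s₁.toReal * s₂.toReal / b.toReal) (by positivity)
  have l₃ := Real.log_le_sub_one_of_pos
    (x := u₁.toReal * u₂.toReal * (b.toReal / c.toReal) /
      (m.toReal * ((f₁.toReal / m.toReal) * (f₂.toReal / m.toReal)))) (by positivity)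
  rw [Real.log_div (by positivity) (by positivity), Real.log_mul (by positivity) (by positivity)]
    at l₁ l₂ l₃
  rw [Real.log_mul (by positivity) (by positivity), Real.log_mul (by positivity) (by positivity),
    Real.log_mul (by positivity) (by positivity), Real.log_div (by positivity) (by positivity),
    Real.log_div (by positivity) (by positivity), Real.log_div (by positivity) (by positivity)]
    at l₃
  linarith

/-- The inequality `h(X₁ - X₂, Y) + 2 h(X, Y) ≤ 2 h(X) + 2 h(X + Y) + 2 h(Y)`, in terms of the
densities: `f` of `(X, Y)`, `v` of `Y`, `u` of `X`, `s` of `X + Y` and `g` of `(X₁ - X₂, Y)`. -/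
lemma integral_log_density_combination_nonneg {Ω : Type*} [MeasurableSpace Ω]
    [StandardBorelSpace Ω] {P : Measure Ω} [IsProbabilityMeasure P] {Y X₁ X₂ : Ω → ℝ}
    (hY : Measurable Y) (hX₁ : Measurable X₁) (hX₂ : Measurable X₂)
    {f g : ℝ × ℝ → ℝ≥0∞} {u s v : ℝ → ℝ≥0∞} (hfm : Measurable f) (hgm : Measurable g)
    (hum : Measurable u) (hsm : Measurable s) (hvm : Measurable v)
    (hf₁ : P.map (fun ω => (X₁ ω, Y ω)) = volume.withDensity f)
    (hf₂ : P.map (fun ω => (X₂ ω, Y ω)) = volume.withDensity f)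
    (hv : P.map Y = volume.withDensity v)
    (hu₁ : P.map X₁ = volume.withDensity u) (hu₂ : P.map X₂ = volume.withDensity u)
    (hs₁ : P.map (fun ω => X₁ ω + Y ω) = volume.withDensity s)
    (hs₂ : P.map (fun ω => X₂ ω + Y ω) = volume.withDensity s)
    (hg : P.map (fun ω => (X₁ ω - X₂ ω, Y ω)) = volume.withDensity g)
    (hci : CondIndepFun (MeasurableSpace.comap Y inferInstance) hY.comap_le X₁ X₂ P)
    (hint : Integrable (fun ω => Real.log (g (X₁ ω - X₂ ω, Y ω)).toReal +
      Real.log (f (X₁ ω, Y ω)).toReal + Real.log (f (X₂ ω, Y ω)).toReal -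
      2 * Real.log (v (Y ω)).toReal - Real.log (u (X₁ ω)).toReal - Real.log (u (X₂ ω)).toReal -
      Real.log (s (X₁ ω + Y ω)).toReal - Real.log (s (X₂ ω + Y ω)).toReal) P) :
    0 ≤ ∫ ω, (Real.log (g (X₁ ω - X₂ ω, Y ω)).toReal +
      Real.log (f (X₁ ω, Y ω)).toReal + Real.log (f (X₂ ω, Y ω)).toReal -
      2 * Real.log (v (Y ω)).toReal - Real.log (u (X₁ ω)).toReal - Real.log (u (X₂ ω)).toReal -
      Real.log (s (X₁ ω + Y ω)).toReal - Real.log (s (X₂ ω + Y ω)).toReal) ∂P := by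
  have hD : Measurable fun ω => X₁ ω - X₂ ω := hX₁.sub hX₂
  have hDY : Measurable fun ω => (X₁ ω - X₂ ω, Y ω) := hD.prodMk hY
  have hYX₁ := map_swap_eq_withDensity (μ := volume) (ν := volume) hX₁ hY hfm hf₁
  have hYX₂ := map_swap_eq_withDensity (μ := volume) (ν := volume) hX₂ hY hfm hf₂
  have hfm' : Measurable fun z : ℝ × ℝ => f (z.2, z.1) := by fun_prop
  -- The density of `Y` and the joint density of `(Y, X₁, X₂)`.
  obtain ⟨m, hm⟩ : ∃ m : ℝ → ℝ≥0∞, m = fun y => ∫⁻ x, f (x, y) := ⟨_, rfl⟩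
  have hmm : Measurable m := by
    rw [hm]
    exact hfm'.lintegral_prod_right'
  have hYm : P.map Y = volume.withDensity m := by
    have := map_eq_withDensity_lintegral hY hX₁ hfm' hYX₁
    rwa [hm]
  have hT : P.map (fun ω => (Y ω, X₁ ω, X₂ ω)) = volume.withDensity fun z =>
      m z.1 * ((f (z.2.1, z.1) / m z.1) * (f (z.2.2, z.1) / m z.1)) := by
    have := map_eq_withDensity_of_condIndepFun hY hX₁ hX₂ hfm' hYX₁ hYX₂ hci
    rwa [hm]
  -- The joint density of `(X₁ - X₂, X₂ + Y)` and the density of `X₁ - X₂`.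
  have hDS : Measurable fun ω => (X₁ ω - X₂ ω, X₂ ω + Y ω) := hD.prodMk (hX₂.add hY)
  have hDS_ac : P.map (fun ω => (X₁ ω - X₂ ω, X₂ ω + Y ω)) ≪ volume := by
    have hTac : P.map (fun ω => (Y ω, X₁ ω, X₂ ω)) ≪ volume :=
      hT ▸ withDensity_absolutelyContinuous _ _
    have := (hTac.map quasiMeasurePreserving_sub_add.measurable).trans
      quasiMeasurePreserving_sub_add.absolutelyContinuous
    rwa [Measure.map_map quasiMeasurePreserving_sub_add.measurable (by fun_prop)] at this
  obtain ⟨b, hbm, hb⟩ : ∃ b : ℝ × ℝ → ℝ≥0∞, Measurable b ∧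
      P.map (fun ω => (X₁ ω - X₂ ω, X₂ ω + Y ω)) = (volume.prod volume).withDensity b :=
    ⟨_, Measure.measurable_rnDeriv _ _, (Measure.withDensity_rnDeriv_eq _ _ hDS_ac).symm⟩
  obtain ⟨c, hc⟩ : ∃ c : ℝ → ℝ≥0∞, c = fun d => ∫⁻ t, b (d, t) := ⟨_, rfl⟩
  have hcm : Measurable c := hc ▸ hbm.lintegral_prod_right'
  have hDc : P.map (fun ω => X₁ ω - X₂ ω) = volume.withDensity c := by
    have := map_eq_withDensity_lintegral hD (hX₂.add hY) hbm hb
    rwa [hc]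
  -- The three likelihood ratios have expectation at most one.
  have hu1 : ∫⁻ x, u x = 1 := lintegral_density_eq_one hX₁ hu₁
  have hs1 : ∫⁻ x, s x = 1 := lintegral_density_eq_one (hX₁.add hY) hs₁
  have r₁ : ∫⁻ ω, c (X₁ ω - X₂ ω) * m (Y ω) / g (X₁ ω - X₂ ω, Y ω) ∂P ≤ 1 := by
    refine (lintegral_div_density_le (q := fun z : ℝ × ℝ => c z.1 * m z.2) hDY hgm
      (by fun_prop) hg).trans_eq ?_
    rw [Measure.volume_eq_prod, lintegral_prod_mul hcm.aemeasurable hmm.aemeasurable,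
      lintegral_density_eq_one hD hDc, lintegral_density_eq_one hY hYm, one_mul]
  have r₂ : ∫⁻ ω, s (X₁ ω + Y ω) * s (X₂ ω + Y ω) / b (X₁ ω - X₂ ω, X₂ ω + Y ω) ∂P ≤ 1 := by
    have h := lintegral_div_density_le (q := fun z : ℝ × ℝ => s (z.1 + z.2) * s z.2) hDS hbm
      (by fun_prop) hb
    have hshear := (measurePreserving_add_prod (volume : Measure ℝ)
      (volume : Measure ℝ)).lintegral_comp (f := fun z : ℝ × ℝ => s z.1 * s z.2) (by fun_prop)
    rw [hshear, lintegral_prod_mul hsm.aemeasurable hsm.aemeasurable, hs1, one_mul] at h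
    simpa only [← add_assoc, sub_add_cancel] using h
  have r₃ : ∫⁻ ω, u (X₁ ω) * u (X₂ ω) *
      (b (X₁ ω - X₂ ω, X₂ ω + Y ω) / c (X₁ ω - X₂ ω)) /
        (m (Y ω) * ((f (X₁ ω, Y ω) / m (Y ω)) * (f (X₂ ω, Y ω) / m (Y ω)))) ∂P ≤ 1 := by
    refine (lintegral_div_density_le (q := fun z : ℝ × ℝ × ℝ => u z.2.1 * u z.2.2 *
      (b (z.2.1 - z.2.2, z.2.2 + z.1) / c (z.2.1 - z.2.2))) (hY.prodMk (hX₁.prodMk hX₂))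
      (by fun_prop) (by fun_prop) hT).trans ?_
    rw [Measure.volume_eq_prod, lintegral_prod_symm' _ (by fun_prop)]
    calc _ ≤ ∫⁻ x : ℝ × ℝ, u x.1 * u x.2 ∂(volume.prod volume) := lintegral_mono fun x => ?_
      _ = 1 := by rw [lintegral_prod_mul hum.aemeasurable hum.aemeasurable, hu1, one_mul]
    simp only [div_eq_mul_inv]
    rw [lintegral_const_mul _ (by fun_prop), lintegral_mul_const _ (by fun_prop),
      lintegral_add_left_eq_self (fun t => b (x.1 - x.2, t)) x.2]
    refine mul_le_of_le_one_right' ?_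
    rw [hc]
    exact ENNReal.mul_inv_le_one _
  have integrable_ratio {r : Ω → ℝ≥0∞} (hr : Measurable r) (h : ∫⁻ ω, r ω ∂P ≤ 1) :
      Integrable (fun ω => (r ω).toReal) P ∧ ∫ ω, (r ω).toReal ∂P ≤ 1 := by
    have htop : ∫⁻ ω, r ω ∂P ≠ ∞ := ne_top_of_le_ne_top ENNReal.one_ne_top h
    refine ⟨integrable_toReal_of_lintegral_ne_top hr.aemeasurable htop, ?_⟩
    rw [integral_toReal hr.aemeasurable (ae_lt_top hr htop)]
    exact ENNReal.toReal_le_of_le_ofReal zero_le_one (by simpa using h)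
  obtain ⟨i₁, j₁⟩ := integrable_ratio (by fun_prop) r₁
  obtain ⟨i₂, j₂⟩ := integrable_ratio (by fun_prop) r₂
  obtain ⟨i₃, j₃⟩ := integrable_ratio (by fun_prop) r₃
  refine le_trans ?_ (integral_mono_ae ((((integrable_const 3).sub i₁).sub i₂).sub i₃) hint ?_)
  · rw [integral_sub' (((integrable_const 3).sub i₁).sub i₂) i₃,
      integral_sub' ((integrable_const 3).sub i₁) i₂, integral_sub' (integrable_const 3) i₁]
    simp only [integral_const, probReal_univ, one_smul]
    linarith
  filter_upwards [ae_eq_of_map_eq_withDensity hY hvm hv, ae_eq_of_map_eq_withDensity hY hmm hYm,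
    ae_density_ne_zero_and_ne_top hD hcm hDc,
    ae_density_ne_zero_and_ne_top hDY hgm hg, ae_density_ne_zero_and_ne_top hDS hbm hb,
    ae_density_ne_zero_and_ne_top hY hmm hYm,
    ae_density_ne_zero_and_ne_top (hX₁.prodMk hY) hfm hf₁,
    ae_density_ne_zero_and_ne_top (hX₂.prodMk hY) hfm hf₂,
    ae_density_ne_zero_and_ne_top hX₁ hum hu₁, ae_density_ne_zero_and_ne_top hX₂ hum hu₂,
    ae_density_ne_zero_and_ne_top (hX₁.add hY) hsm hs₁,
    ae_density_ne_zero_and_ne_top (hX₂.add hY) hsm hs₂] with ω e e' a₁ a₂ a₃ a₄ a₅ a₆ a₇ a₈ a₉ a₁₀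
  rw [← e, e']
  exact log_combination_ge a₁ a₂ a₃ a₄ a₅ a₆ a₇ a₈ a₉ a₁₀

/-- **Weak Balog-Szemerédi-Gowers lemma for differential entropy.**
Suppose `X, Y` are continuous random variables with `h(X,Y) ≥ h(X) + h(Y) - log K` and
`h(X+Y) ≤ ½h(X) + ½h(Y) + log K` for some `K ≥ 1`.  If `X₁, X₂` are conditionally
independent versions of `X` given `Y`, then `h(X₁ - X₂ | Y) ≤ h(X) + 4 log K`. -/
theorem weak_balog_szemeredi_gowers
    {Ω : Type*} [MeasurableSpace Ω] [StandardBorelSpace Ω]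
    (P : Measure Ω) [IsProbabilityMeasure P]
    (X Y X₁ X₂ : Ω → ℝ)
    (hX : Measurable X) (hY : Measurable Y) (hX₁ : Measurable X₁) (hX₂ : Measurable X₂)
    (K : ℝ) (hK : 1 ≤ K)
    (hfX : FiniteDent volume P X) (hfY : FiniteDent volume P Y)
    (hfXY : FiniteDent volume P (fun ω => (X ω, Y ω)))
    (hfsum : FiniteDent volume P (X + Y))
    (hfdiff : FiniteDent volume P (fun ω => (X₁ ω - X₂ ω, Y ω)))
    (hdep : dent volume P (fun ω => (X ω, Y ω)) ≥
      dent volume P X + dent volume P Y - Real.log K)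
    (hsum : dent volume P (X + Y) ≤
      (1 / 2) * dent volume P X + (1 / 2) * dent volume P Y + Real.log K)
    (hid₁ : IdentDistrib (fun ω => (X₁ ω, Y ω)) (fun ω => (X ω, Y ω)) P P)
    (hid₂ : IdentDistrib (fun ω => (X₂ ω, Y ω)) (fun ω => (X ω, Y ω)) P P)
    (hci : CondIndepFun (MeasurableSpace.comap Y inferInstance) hY.comap_le X₁ X₂ P) :
    condDent P (X₁ - X₂) Y ≤ dent volume P X + 4 * Real.log K := by
  have hDY : Measurable fun ω => (X₁ ω - X₂ ω, Y ω) := (hX₁.sub hX₂).prodMk hY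
  have law_eq {X' : Ω → ℝ}
      (hid : IdentDistrib (fun ω => (X' ω, Y ω)) (fun ω => (X ω, Y ω)) P P) :
      P.map X' = P.map X ∧ P.map (fun ω => X' ω + Y ω) = P.map (X + Y) :=
    ⟨(hid.comp measurable_fst).map_eq, (hid.comp (measurable_fst.add measurable_snd)).map_eq⟩
  obtain ⟨eX₁, eS₁⟩ := law_eq hid₁
  obtain ⟨eX₂, eS₂⟩ := law_eq hid₂
  have eP₁ := hid₁.map_eq
  have eP₂ := hid₂.map_eq
  have mP₁ : Measurable fun ω => (X₁ ω, Y ω) := hX₁.prodMk hY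
  have mP₂ : Measurable fun ω => (X₂ ω, Y ω) := hX₂.prodMk hY
  have mS₁ : Measurable fun ω => X₁ ω + Y ω := hX₁.add hY
  have mS₂ : Measurable fun ω => X₂ ω + Y ω := hX₂.add hY
  have iD := hfdiff.integrable hDY rfl
  have iY := hfY.integrable hY rfl
  have iP₁ := hfXY.integrable mP₁ eP₁
  have iP₂ := hfXY.integrable mP₂ eP₂
  have iX₁ := hfX.integrable hX₁ eX₁
  have iX₂ := hfX.integrable hX₂ eX₂
  have iS₁ := hfsum.integrable mS₁ eS₁
  have iS₂ := hfsum.integrable mS₂ eS₂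
  have j₂ := (iD.add iP₁).add iP₂
  have j₃ := j₂.sub (iY.const_mul 2)
  have j₄ := j₃.sub iX₁
  have j₅ := j₄.sub iX₂
  have j₆ := j₅.sub iS₁
  have split := integral_sub' j₆ iS₂
  rw [integral_sub' j₅ iS₁, integral_sub' j₄ iX₂, integral_sub' j₃ iX₁,
    integral_sub' j₂ (iY.const_mul 2), integral_add' (iD.add iP₁) iP₂, integral_add' iD iP₁,
    integral_const_mul] at split
  have key := (integral_log_density_combination_nonneg hY hX₁ hX₂
    (Measure.measurable_rnDeriv _ _) (Measure.measurable_rnDeriv _ _)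
    (Measure.measurable_rnDeriv _ _) (Measure.measurable_rnDeriv _ _)
    (Measure.measurable_rnDeriv _ _) (eP₁.trans hfXY.map_eq) (eP₂.trans hfXY.map_eq)
    hfY.map_eq (eX₁.trans hfX.map_eq) (eX₂.trans hfX.map_eq) (eS₁.trans hfsum.map_eq)
    (eS₂.trans hfsum.map_eq) hfdiff.map_eq hci
    (j₆.sub iS₂)).trans_eq split
  have dD := dent_eq (μ := volume) hDY (P := P) rfl
  have dY := dent_eq (μ := volume) hY (P := P) rfl
  have dP₁ := dent_eq (μ := volume) mP₁ eP₁
  have dP₂ := dent_eq (μ := volume) mP₂ eP₂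
  have dX₁ := dent_eq (μ := volume) hX₁ eX₁
  have dX₂ := dent_eq (μ := volume) hX₂ eX₂
  have dS₁ := dent_eq (μ := volume) mS₁ eS₁
  have dS₂ := dent_eq (μ := volume) mS₂ eS₂
  simp only [condDent, Pi.sub_apply]
  linarith
end

section
/- Balog-Szemerédi-Gowers lemma for differential entropy: Suppose X, Y are real-valued continuous random variables with all relevant differential entropies existing and finite, satisfying h(X,Y) ≥ h(X) + h(Y) - log K and h(X+Y) ≤ (1/2)h(X) + (1/2)h(Y) + log K for some K ≥ 1. Let X1, X2 be conditionally independent versions of X given Y, and let Y' be a conditionally independent version of Y given (X2, Y); that is, X2, Y, X1, Y' form a Markov chain in which the pairs (X2,Y), (X1,Y) and (X1,Y') each have the same joint distribution as (X,Y). Then: h(X2 | X1, Y) ≥ h(X) - log K; h(Y' | X1, Y) ≥ h(Y) - log K; and h(X2 + Y' | X1, Y) ≤ (1/2)h(X) + (1/2)h(Y) + 7 log K. -/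
open MeasureTheory ProbabilityTheory

open scoped ENNReal

/-- The density of the law of `A` with respect to the volume. -/
noncomputable def lawDensity {Ω E : Type*} [MeasurableSpace Ω] [MeasureSpace E]
    (P : Measure Ω) (A : Ω → E) : E → ℝ≥0∞ :=
  (P.map A).rnDeriv volume

/-- The logarithm of the density of `A`, evaluated at `A` itself. -/
noncomputable def logDensity {Ω E : Type*} [MeasurableSpace Ω] [MeasureSpace E]
    (P : Measure Ω) (A : Ω → E) (ω : Ω) : ℝ :=
  Real.log (lawDensity P A (A ω)).toReal

/-- `L` is almost surely dominated by an integrable function of nonpositive mean. -/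
def DominatedByNonpos {Ω : Type*} [MeasurableSpace Ω] (P : Measure Ω) (L : Ω → ℝ) : Prop :=
  ∃ g : Ω → ℝ, Integrable g P ∧ ∫ ω, g ω ∂P ≤ 0 ∧ L ≤ᵐ[P] g

/-- `A` and `B` both have densities, and these agree along the sample. -/
def SameDensity {Ω E F : Type*} [MeasurableSpace Ω] [MeasureSpace E] [MeasureSpace F]
    (P : Measure Ω) (A : Ω → E) (B : Ω → F) : Prop :=
  P.map A ≪ volume ∧ P.map B ≪ volume ∧ logDensity P A =ᵐ[P] logDensity P B

section Dominated

variable {Ω : Type*} [MeasurableSpace Ω] {P : Measure Ω}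

lemma DominatedByNonpos.add {L M : Ω → ℝ} (hL : DominatedByNonpos P L)
    (hM : DominatedByNonpos P M) : DominatedByNonpos P (L + M) := by
  obtain ⟨g, hg, hg0, hLg⟩ := hL
  obtain ⟨k, hk, hk0, hMk⟩ := hM
  refine ⟨g + k, hg.add hk, ?_, hLg.add_le_add hMk⟩
  simp only [Pi.add_apply]
  rw [integral_add hg hk]
  linarith

lemma DominatedByNonpos.congr {L M : Ω → ℝ} (hL : DominatedByNonpos P L) (h : L =ᵐ[P] M) :
    DominatedByNonpos P M := by
  obtain ⟨g, hg, hg0, hLg⟩ := hL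
  exact ⟨g, hg, hg0, h.symm.le.trans hLg⟩

lemma DominatedByNonpos.integral_nonpos {L : Ω → ℝ} (hL : DominatedByNonpos P L)
    (hi : Integrable L P) : ∫ ω, L ω ∂P ≤ 0 := by
  obtain ⟨g, hg, hg0, hLg⟩ := hL
  exact (integral_mono_ae hi hg hLg).trans hg0

lemma dominatedByNonpos_log [IsProbabilityMeasure P] {F : Ω → ℝ≥0∞} (hF : Measurable F)
    (h0 : ∀ᵐ ω ∂P, F ω ≠ 0) (h1 : ∫⁻ ω, F ω ∂P ≤ 1) :
    DominatedByNonpos P (fun ω => Real.log (F ω).toReal) := by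
  have hfin : ∫⁻ ω, F ω ∂P ≠ ∞ := (h1.trans_lt ENNReal.one_lt_top).ne
  have htop := ae_lt_top hF hfin
  have hi : Integrable (fun ω => (F ω).toReal) P := integrable_toReal_of_lintegral_ne_top
    hF.aemeasurable hfin
  refine ⟨fun ω => (F ω).toReal - 1, hi.sub (integrable_const 1), ?_, ?_⟩
  · rw [integral_sub hi (integrable_const 1), integral_toReal hF.aemeasurable htop]
    have := ENNReal.toReal_mono ENNReal.one_ne_top h1
    simpa using this
  · filter_upwards [h0, htop] with ω h0 ht
    exact Real.log_le_sub_one_of_pos (ENNReal.toReal_pos h0 ht.ne)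

end Dominated

section Density

lemma log_toReal_mul_div_div {a b c d : ℝ≥0∞} (ha : a ≠ 0 ∧ a ≠ ∞) (hb : b ≠ 0 ∧ b ≠ ∞)
    (hc : c ≠ 0 ∧ c ≠ ∞) (hd : d ≠ 0 ∧ d ≠ ∞) :
    Real.log (a * b / c / d).toReal =
      Real.log a.toReal + Real.log b.toReal - Real.log d.toReal - Real.log c.toReal := by
  have ha' := (ENNReal.toReal_pos ha.1 ha.2).ne'
  have hb' := (ENNReal.toReal_pos hb.1 hb.2).ne'
  have hc' := (ENNReal.toReal_pos hc.1 hc.2).ne'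
  have hd' := (ENNReal.toReal_pos hd.1 hd.2).ne'
  rw [ENNReal.toReal_div, ENNReal.toReal_div, ENNReal.toReal_mul, Real.log_div (by positivity) hd',
    Real.log_div (by positivity) hc', Real.log_mul ha' hb']
  ring

variable {Ω E : Type*} [MeasurableSpace Ω] [MeasureSpace E] {P : Measure Ω} {A : Ω → E}

@[fun_prop]
lemma measurable_lawDensity : Measurable (lawDensity P A) := Measure.measurable_rnDeriv _ _

lemma integrable_logDensity (hA : Measurable A) (hf : FiniteDent volume P A) :
    Integrable (logDensity P A) P :=
  hf.2.comp_measurable hA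

lemma integral_logDensity (hA : Measurable A) :
    ∫ ω, logDensity P A ω ∂P = -dent volume P A := by
  have hm : Measurable fun x => Real.log (lawDensity P A x).toReal := by fun_prop
  rw [dent, neg_neg]
  exact (integral_map hA.aemeasurable hm.aestronglyMeasurable).symm

variable [SigmaFinite (volume : Measure E)] [IsProbabilityMeasure P]

lemma withDensity_lawDensity (hac : P.map A ≪ volume) :
    (volume : Measure E).withDensity (lawDensity P A) = P.map A :=
  Measure.withDensity_rnDeriv_eq _ _ hac

lemma lintegral_lawDensity (hA : Measurable A) (hac : P.map A ≪ volume) :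
    ∫⁻ x, lawDensity P A x = 1 := by
  have := Measure.isProbabilityMeasure_map (μ := P) hA.aemeasurable
  rw [← setLIntegral_univ, ← withDensity_apply _ MeasurableSet.univ, withDensity_lawDensity hac,
    measure_univ]

lemma ae_lawDensity_ne (hA : Measurable A) (hac : P.map A ≪ volume) :
    ∀ᵐ ω ∂P, lawDensity P A (A ω) ≠ 0 ∧ lawDensity P A (A ω) ≠ ∞ := by
  have h1 := ae_of_ae_map hA.aemeasurable (Measure.rnDeriv_pos hac)
  have h2 := ae_of_ae_map hA.aemeasurable (hac.ae_le (Measure.rnDeriv_lt_top (P.map A) volume))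
  filter_upwards [h1, h2] with ω h1 h2
  exact ⟨h1.ne', h2.ne⟩

lemma lintegral_div_lawDensity_le (hA : Measurable A) (hac : P.map A ≪ volume) {g : E → ℝ≥0∞}
    (hg : Measurable g) (h1 : ∫⁻ x, g x ≤ 1) :
    ∫⁻ ω, g (A ω) / lawDensity P A (A ω) ∂P ≤ 1 := by
  have hm : Measurable fun x => g x / lawDensity P A x := hg.div measurable_lawDensity
  rw [← lintegral_map hm hA, ← withDensity_lawDensity hac,
    lintegral_withDensity_eq_lintegral_mul _ measurable_lawDensity hm]
  refine (lintegral_mono fun x => ?_).trans h1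
  exact ENNReal.mul_div_le

end Density

section Joint

variable {Ω E F G : Type*} [MeasurableSpace Ω] [MeasureSpace E] [MeasureSpace F] [MeasureSpace G]
  {P : Measure Ω} {A : Ω → E} {B : Ω → F} {C : Ω → G}

lemma map_fst_absolutelyContinuous (hA : Measurable A) (hB : Measurable B)
    (h : P.map (fun ω => (A ω, B ω)) ≪ volume) : P.map A ≪ volume := by
  have := (h.map measurable_fst).trans Measure.quasiMeasurePreserving_fst.absolutelyContinuous
  rwa [Measure.map_map measurable_fst (hA.prodMk hB)] at this

lemma map_snd_absolutelyContinuous (hA : Measurable A) (hB : Measurable B)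
    (h : P.map (fun ω => (A ω, B ω)) ≪ volume) : P.map B ≪ volume := by
  have := (h.map measurable_snd).trans Measure.quasiMeasurePreserving_snd.absolutelyContinuous
  rwa [Measure.map_map measurable_snd (hA.prodMk hB)] at this

lemma ProbabilityTheory.CondIndepFun.map_apply_prod [IsProbabilityMeasure P]
    [StandardBorelSpace Ω] [StandardBorelSpace E]
    [Nonempty E] [StandardBorelSpace F] [Nonempty F] (hA : Measurable A) (hB : Measurable B)
    (hC : Measurable C)
    (hind : CondIndepFun (MeasurableSpace.comap C inferInstance) hC.comap_le A B P)
    {s : Set E} {t : Set F} {u : Set G} (hs : MeasurableSet s) (ht : MeasurableSet t)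
    (hu : MeasurableSet u) :
    P.map (fun ω => (A ω, (B ω, C ω))) (s ×ˢ t ×ˢ u) =
      ∫⁻ c in u, condDistrib A C P c s * condDistrib B C P c t ∂P.map C := by
  have hmap := (condIndepFun_iff_map_prod_eq_prod_condDistrib_prod_condDistrib hA hB hC).1 hind
  have hswap : P.map (fun ω => (A ω, (B ω, C ω))) (s ×ˢ t ×ˢ u) =
      P.map (fun ω => (C ω, (A ω, B ω))) (u ×ˢ s ×ˢ t) := by
    rw [Measure.map_apply (by fun_prop) (by measurability),
      Measure.map_apply (by fun_prop) (by measurability)]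
    congr 1
    ext ω
    simp only [Set.mem_preimage, Set.mem_prod]
    tauto
  rw [hswap, hmap, Measure.bind_apply (hu.prod (hs.prod ht)) (by fun_prop),
    ← lintegral_indicator hu]
  refine lintegral_congr fun c => ?_
  simp only [Kernel.prod_apply_prod, Kernel.id_apply, Measure.dirac_apply' _ hu]
  by_cases hc : c ∈ u <;> simp [hc]

variable [SigmaFinite (volume : Measure E)] [SigmaFinite (volume : Measure F)]
  [SigmaFinite (volume : Measure G)]

lemma map_fst_snd_absolutelyContinuous (hA : Measurable A) (hB : Measurable B) (hC : Measurable C)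
    (h : P.map (fun ω => (A ω, (B ω, C ω))) ≪ volume) :
    P.map (fun ω => (A ω, C ω)) ≪ volume := by
  have hq : Measure.QuasiMeasurePreserving (Prod.map id Prod.snd : E × F × G → E × G)
      volume volume :=
    QuasiMeasurePreserving.prodMap (.id (volume : Measure E))
      (Measure.quasiMeasurePreserving_snd (μ := (volume : Measure F)) (ν := (volume : Measure G)))
  have := (h.map hq.measurable).trans hq.absolutelyContinuous
  rwa [Measure.map_map hq.measurable (hA.prodMk (hB.prodMk hC))] at this

lemma setLIntegral_mul_div {f : E × G → ℝ≥0∞} {g : F × G → ℝ≥0∞} {k : G → ℝ≥0∞}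
    (hf : Measurable f) (hg : Measurable g) (hk : Measurable k) (s : Set E) (t : Set F)
    (u : Set G) :
    ∫⁻ z in s ×ˢ t ×ˢ u, f (z.1, z.2.2) * g z.2 / k z.2.2 =
      ∫⁻ c in u, (∫⁻ a in s, f (a, c)) * (∫⁻ b in t, g (b, c)) / k c := by
  have hfu : Measurable fun c => ∫⁻ a in s, f (a, c) := Measurable.lintegral_prod_left' hf
  rw [Measure.volume_eq_prod, ← Measure.prod_restrict, lintegral_prod_symm _ (by fun_prop),
    Measure.volume_eq_prod, ← Measure.prod_restrict]
  have hinner (z : F × G) : ∫⁻ a in s, f (a, z.2) * g z / k z.2 =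
      (∫⁻ a in s, f (a, z.2)) * g z / k z.2 := by
    simp only [div_eq_mul_inv, mul_assoc]
    exact lintegral_mul_const _ (by fun_prop)
  simp only [hinner]
  rw [lintegral_prod_symm _ (by fun_prop)]
  refine lintegral_congr fun c => ?_
  simp only [div_eq_mul_inv, mul_assoc]
  rw [lintegral_const_mul _ (by fun_prop), lintegral_mul_const _ (by fun_prop)]

variable [IsProbabilityMeasure P]

lemma setLIntegral_lawDensity_ae_eq [StandardBorelSpace E] [Nonempty E]
    (hA : Measurable A) (hC : Measurable C)
    (h : P.map (fun ω => (A ω, C ω)) ≪ volume) {s : Set E} (hs : MeasurableSet s) :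
    (fun c => ∫⁻ a in s, lawDensity P (fun ω => (A ω, C ω)) (a, c)) =ᵐ[volume]
      fun c => condDistrib A C P c s * lawDensity P C c := by
  have hacC := map_snd_absolutelyContinuous hA hC h
  have hmeas : Measurable (lawDensity P (fun ω => (A ω, C ω))) := measurable_lawDensity
  have hκ := Kernel.measurable_coe (condDistrib A C P) hs
  refine ae_eq_of_forall_setLIntegral_eq_of_sigmaFinite
    (Measurable.lintegral_prod_left' hmeas) (hκ.mul measurable_lawDensity) fun u hu _ => ?_
  calc ∫⁻ c in u, ∫⁻ a in s, lawDensity P (fun ω => (A ω, C ω)) (a, c)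
      = ∫⁻ z in s ×ˢ u, lawDensity P (fun ω => (A ω, C ω)) z := by
        rw [Measure.volume_eq_prod, ← Measure.prod_restrict,
          lintegral_prod_symm _ hmeas.aemeasurable]
    _ = P.map (fun ω => (A ω, C ω)) (s ×ˢ u) := by
        rw [← withDensity_apply _ (hs.prod hu), withDensity_lawDensity h]
    _ = P (C ⁻¹' u ∩ A ⁻¹' s) := by
        rw [Measure.map_apply (hA.prodMk hC) (hs.prod hu), Set.inter_comm]
        rfl
    _ = ∫⁻ c in u, condDistrib A C P c s ∂P.map C := by
        rw [← setLIntegral_preimage_condDistrib hC hA.aemeasurable hs hu,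
          setLIntegral_map hu hκ hC]
    _ = ∫⁻ c in u, condDistrib A C P c s * lawDensity P C c := by
        rw [← withDensity_lawDensity hacC, setLIntegral_withDensity_eq_setLIntegral_mul _
          measurable_lawDensity hκ hu]
        simp only [Pi.mul_apply, mul_comm]

/-- Submodularity of differential entropy, in pointwise form. -/
lemma dominatedByNonpos_submodular [StandardBorelSpace E] [Nonempty E] [StandardBorelSpace F]
    [Nonempty F] (hA : Measurable A) (hB : Measurable B) (hC : Measurable C)
    (h : P.map (fun ω => (A ω, (B ω, C ω))) ≪ volume) :
    DominatedByNonpos P (fun ω => logDensity P (fun ω => (A ω, C ω)) ω +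
      logDensity P (fun ω => (B ω, C ω)) ω - logDensity P (fun ω => (A ω, (B ω, C ω))) ω -
      logDensity P C ω) := by
  have hAC := map_fst_snd_absolutelyContinuous hA hB hC h
  have hBC := map_snd_absolutelyContinuous hA (hB.prodMk hC) h
  have hC' := map_snd_absolutelyContinuous hB hC hBC
  set f := lawDensity P (fun ω => (A ω, C ω)) with hf_def
  set g := lawDensity P (fun ω => (B ω, C ω)) with hg_def
  set k := lawDensity P C with hk_def
  have hf : Measurable f := measurable_lawDensity
  have hg : Measurable g := measurable_lawDensity
  have hk : Measurable k := measurable_lawDensity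
  have hint : ∫⁻ z : E × F × G, f (z.1, z.2.2) * g z.2 / k z.2.2 ≤ 1 := by
    have := setLIntegral_mul_div hf hg hk Set.univ Set.univ Set.univ
    simp only [Set.univ_prod_univ, setLIntegral_univ] at this
    rw [this, ← lintegral_lawDensity hC hC']
    refine lintegral_mono_ae ?_
    have hfst := setLIntegral_lawDensity_ae_eq hA hC hAC MeasurableSet.univ
    have hsnd := setLIntegral_lawDensity_ae_eq hB hC hBC MeasurableSet.univ
    filter_upwards [hfst, hsnd] with c h1 h2
    simp only [setLIntegral_univ, measure_univ, one_mul, ← hf_def, ← hg_def] at h1 h2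
    rw [h1, h2, mul_div_assoc]
    exact mul_le_of_le_one_right' ENNReal.div_self_le_one
  have hABC : Measurable fun ω => (A ω, (B ω, C ω)) := hA.prodMk (hB.prodMk hC)
  have hbound := lintegral_div_lawDensity_le hABC h (by fun_prop) hint
  have n1 := ae_lawDensity_ne (hA.prodMk hC) hAC
  have n2 := ae_lawDensity_ne (hB.prodMk hC) hBC
  have n3 := ae_lawDensity_ne hC hC'
  have n4 := ae_lawDensity_ne hABC h
  refine (dominatedByNonpos_log (by fun_prop) ?_ hbound).congr ?_
  · filter_upwards [n1, n2, n3, n4] with ω n1 n2 n3 n4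
    exact (ENNReal.div_pos (ENNReal.div_pos (mul_ne_zero n1.1 n2.1) n3.2).ne' n4.2).ne'
  · filter_upwards [n1, n2, n3, n4] with ω n1 n2 n3 n4
    exact log_toReal_mul_div_div n1 n2 n3 n4

/-- Subadditivity of differential entropy, in pointwise form. -/
lemma dominatedByNonpos_subadditive (hA : Measurable A) (hB : Measurable B)
    (h : P.map (fun ω => (A ω, B ω)) ≪ volume) :
    DominatedByNonpos P (fun ω => logDensity P A ω + logDensity P B ω -
      logDensity P (fun ω => (A ω, B ω)) ω) := by
  have hA' := map_fst_absolutelyContinuous hA hB h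
  have hB' := map_snd_absolutelyContinuous hA hB h
  have hint : ∫⁻ z : E × F, lawDensity P A z.1 * lawDensity P B z.2 ≤ 1 := by
    rw [Measure.volume_eq_prod, lintegral_prod_mul measurable_lawDensity.aemeasurable
      measurable_lawDensity.aemeasurable, lintegral_lawDensity hA hA', lintegral_lawDensity hB hB',
      one_mul]
  have hbound := lintegral_div_lawDensity_le (hA.prodMk hB) h (by fun_prop) hint
  have n1 := ae_lawDensity_ne hA hA'
  have n2 := ae_lawDensity_ne hB hB'
  have n3 := ae_lawDensity_ne (hA.prodMk hB) h
  refine (dominatedByNonpos_log (by fun_prop) ?_ hbound).congr ?_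
  · filter_upwards [n1, n2, n3] with ω n1 n2 n3
    exact (ENNReal.div_pos (mul_ne_zero n1.1 n2.1) n3.2).ne'
  · filter_upwards [n1, n2, n3] with ω n1 n2 n3
    have := log_toReal_mul_div_div n1 n2 ⟨one_ne_zero, ENNReal.one_ne_top⟩ n3
    simpa [logDensity] using this

/-- The joint law of conditionally independent variables has the factorized density. -/
lemma ProbabilityTheory.CondIndepFun.map_eq_withDensity [StandardBorelSpace Ω]
    [StandardBorelSpace E] [Nonempty E]
    [StandardBorelSpace F] [Nonempty F] (hA : Measurable A) (hB : Measurable B)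
    (hC : Measurable C)
    (hind : CondIndepFun (MeasurableSpace.comap C inferInstance) hC.comap_le A B P)
    (hAC : P.map (fun ω => (A ω, C ω)) ≪ volume) (hBC : P.map (fun ω => (B ω, C ω)) ≪ volume) :
    P.map (fun ω => (A ω, (B ω, C ω))) = (volume : Measure (E × F × G)).withDensity
      (fun z => lawDensity P (fun ω => (A ω, C ω)) (z.1, z.2.2) *
        lawDensity P (fun ω => (B ω, C ω)) z.2 / lawDensity P C z.2.2) := by
  have hC' := map_snd_absolutelyContinuous hA hC hAC
  have := Measure.isProbabilityMeasure_map (μ := P) (hA.prodMk (hB.prodMk hC)).aemeasurable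
  refine Measure.ext_prod₃ fun {s t u} hs ht hu => ?_
  have hκ : Measurable fun c => condDistrib A C P c s * condDistrib B C P c t :=
    (Kernel.measurable_coe _ hs).mul (Kernel.measurable_coe _ ht)
  rw [CondIndepFun.map_apply_prod hA hB hC hind hs ht hu,
    withDensity_apply _ (hs.prod (ht.prod hu)), setLIntegral_mul_div measurable_lawDensity
      measurable_lawDensity measurable_lawDensity]
  have hwd : ∫⁻ c in u, condDistrib A C P c s * condDistrib B C P c t ∂P.map C =
      ∫⁻ c in u, lawDensity P C c * (condDistrib A C P c s * condDistrib B C P c t) := by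
    conv_lhs => rw [← withDensity_lawDensity hC']
    rw [setLIntegral_withDensity_eq_setLIntegral_mul _ measurable_lawDensity hκ hu]
    rfl
  rw [hwd]
  refine lintegral_congr_ae (ae_restrict_of_ae ?_)
  filter_upwards [setLIntegral_lawDensity_ae_eq hA hC hAC hs,
    setLIntegral_lawDensity_ae_eq hB hC hBC ht, Measure.rnDeriv_lt_top (P.map C) volume]
    with c h1 h2 h3
  rw [h1, h2]
  rcases eq_or_ne (lawDensity P C c) 0 with h0 | h0
  · simp [h0]
  · rw [← mul_assoc _ _ (lawDensity P C c), ENNReal.mul_div_cancel_right h0 h3.ne]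
    ring

/-- Conditionally independent variables have a joint density, which factorizes. -/
lemma ProbabilityTheory.CondIndepFun.logDensity_ae_eq [StandardBorelSpace Ω]
    [StandardBorelSpace E] [Nonempty E]
    [StandardBorelSpace F] [Nonempty F] (hA : Measurable A) (hB : Measurable B)
    (hC : Measurable C)
    (hind : CondIndepFun (MeasurableSpace.comap C inferInstance) hC.comap_le A B P)
    (hAC : P.map (fun ω => (A ω, C ω)) ≪ volume) (hBC : P.map (fun ω => (B ω, C ω)) ≪ volume) :
    P.map (fun ω => (A ω, (B ω, C ω))) ≪ volume ∧
      ∀ᵐ ω ∂P, logDensity P (fun ω => (A ω, (B ω, C ω))) ω =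
        logDensity P (fun ω => (A ω, C ω)) ω + logDensity P (fun ω => (B ω, C ω)) ω -
          logDensity P C ω := by
  have hC' := map_snd_absolutelyContinuous hA hC hAC
  have hABC : Measurable fun ω => (A ω, (B ω, C ω)) := hA.prodMk (hB.prodMk hC)
  have hmap := CondIndepFun.map_eq_withDensity hA hB hC hind hAC hBC
  have hac : P.map (fun ω => (A ω, (B ω, C ω))) ≪ volume := by
    rw [hmap]
    exact withDensity_absolutelyContinuous _ _
  refine ⟨hac, ?_⟩
  have hmeas : Measurable fun z : E × F × G => lawDensity P (fun ω => (A ω, C ω)) (z.1, z.2.2) *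
        lawDensity P (fun ω => (B ω, C ω)) z.2 / lawDensity P C z.2.2 := by fun_prop
  have hrn := Measure.rnDeriv_withDensity (volume : Measure (E × F × G)) hmeas
  rw [← hmap] at hrn
  filter_upwards [ae_of_ae_map hABC.aemeasurable (hac.ae_le hrn),
    ae_lawDensity_ne (hA.prodMk hC) hAC, ae_lawDensity_ne (hB.prodMk hC) hBC,
    ae_lawDensity_ne hC hC'] with ω h n1 n2 n3
  have := log_toReal_mul_div_div n1 n2 n3 ⟨one_ne_zero, ENNReal.one_ne_top⟩
  have h' : lawDensity P (fun ω => (A ω, (B ω, C ω))) (A ω, (B ω, C ω)) =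
    lawDensity P (fun ω => (A ω, C ω)) (A ω, C ω) *
        lawDensity P (fun ω => (B ω, C ω)) (B ω, C ω) / lawDensity P C (C ω) := h
  simp only [logDensity]
  rw [h']
  simpa using this

end Joint

section Invariance

variable {Ω D E F G : Type*} [MeasurableSpace Ω] [MeasureSpace D] [MeasureSpace E]
  [MeasureSpace F] [MeasureSpace G]
  {P : Measure Ω} {Z : Ω → D} {A : Ω → E} {B : Ω → F} {C : Ω → G}

lemma SameDensity.refl (h : P.map A ≪ volume) : SameDensity P A A := ⟨h, h, .rfl⟩

lemma SameDensity.dent_eq (h : SameDensity P A B) (hA : Measurable A) (hB : Measurable B) :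
    dent volume P A = dent volume P B := by
  have := integral_congr_ae h.2.2
  rw [integral_logDensity hA, integral_logDensity hB] at this
  linarith

lemma SameDensity.finiteDent (h : SameDensity P A B) (hA : Measurable A) (hB : Measurable B)
    (hf : FiniteDent volume P A) : FiniteDent volume P B := by
  have hm : Measurable fun x => Real.log (lawDensity P B x).toReal := by fun_prop
  exact ⟨h.2.1, (integrable_map_measure hm.aestronglyMeasurable hB.aemeasurable).2
    ((integrable_logDensity hA hf).congr h.2.2)⟩

variable [SigmaFinite (volume : Measure E)] [IsProbabilityMeasure P]

lemma SameDensity.equiv (h : SameDensity P Z A) (hA : Measurable A) (e : E ≃ᵐ F)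
    (he : MeasurePreserving e volume volume) : SameDensity P Z (fun ω => e (A ω)) := by
  have hmap : P.map (fun ω => e (A ω)) = (P.map A).map e :=
    (Measure.map_map e.measurable hA).symm
  refine ⟨h.1, ?_, h.2.2.trans ?_⟩
  · rw [hmap, ← he.map_eq]
    exact h.2.1.map e.measurable
  · have := Measure.isProbabilityMeasure_map (μ := P) hA.aemeasurable
    have hrn := e.measurableEmbedding.rnDeriv_map (P.map A) volume
    rw [he.map_eq, ← hmap] at hrn
    filter_upwards [ae_of_ae_map hA.aemeasurable (h.2.1.ae_le hrn)] with ω hω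
    simp only [logDensity, lawDensity]
    rw [hω]

variable [SigmaFinite (volume : Measure F)] [SigmaFinite (volume : Measure G)]

lemma SameDensity.swap (h : SameDensity P Z (fun ω => (A ω, B ω))) (hA : Measurable A)
    (hB : Measurable B) : SameDensity P Z (fun ω => (B ω, A ω)) :=
  h.equiv (hA.prodMk hB) MeasurableEquiv.prodComm Measure.measurePreserving_swap

lemma SameDensity.assoc (h : SameDensity P Z (fun ω => ((A ω, B ω), C ω))) (hA : Measurable A)
    (hB : Measurable B) (hC : Measurable C) : SameDensity P Z (fun ω => (A ω, (B ω, C ω))) :=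
  h.equiv ((hA.prodMk hB).prodMk hC) MeasurableEquiv.prodAssoc
    (measurePreserving_prodAssoc volume volume volume)

lemma SameDensity.assoc_symm (h : SameDensity P Z (fun ω => (A ω, (B ω, C ω))))
    (hA : Measurable A) (hB : Measurable B) (hC : Measurable C) :
    SameDensity P Z (fun ω => ((A ω, B ω), C ω)) :=
  h.equiv (hA.prodMk (hB.prodMk hC)) MeasurableEquiv.prodAssoc.symm
    ((measurePreserving_prodAssoc volume volume volume).symm _)

lemma SameDensity.rotate (h : SameDensity P Z (fun ω => (A ω, (B ω, C ω))))
    (hA : Measurable A) (hB : Measurable B) (hC : Measurable C) :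
    SameDensity P Z (fun ω => (C ω, (A ω, B ω))) :=
  (h.assoc_symm hA hB hC).swap (hA.prodMk hB) hC

lemma SameDensity.swap_right (h : SameDensity P Z (fun ω => (A ω, (B ω, C ω))))
    (hA : Measurable A) (hB : Measurable B) (hC : Measurable C) :
    SameDensity P Z (fun ω => (A ω, (C ω, B ω))) :=
  h.equiv (hA.prodMk (hB.prodMk hC))
    (MeasurableEquiv.prodCongr (MeasurableEquiv.refl E) MeasurableEquiv.prodComm)
    ((MeasurePreserving.id volume).prod Measure.measurePreserving_swap)

lemma SameDensity.add_comp {A : Ω → ℝ} (h : SameDensity P Z (fun ω => (A ω, B ω)))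
    (hA : Measurable A) (hB : Measurable B) {g : F → ℝ} (hg : Measurable g) :
    SameDensity P Z (fun ω => (A ω + g (B ω), B ω)) := by
  let e : F × ℝ ≃ᵐ F × ℝ :=
    { toFun := fun z => (z.1, z.2 + g z.1)
      invFun := fun z => (z.1, z.2 - g z.1)
      left_inv := fun z => by simp
      right_inv := fun z => by simp
      measurable_toFun := by simp only [Equiv.coe_fn_mk]; fun_prop
      measurable_invFun := by simp only [Equiv.coe_fn_symm_mk]; fun_prop }
  have he : MeasurePreserving e volume volume :=
    (MeasurePreserving.id (volume : Measure F)).skew_product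
      (g := fun b a => a + g b) (by fun_prop)
      (.of_forall fun b => (measurePreserving_add_right (volume : Measure ℝ) (g b)).map_eq)
  exact ((h.swap hA hB).equiv (hB.prodMk hA) e he).swap hB (hA.add (hg.comp hB))

lemma SameDensity.comp_sub {A : Ω → ℝ} (h : SameDensity P Z (fun ω => (A ω, B ω)))
    (hA : Measurable A) (hB : Measurable B) {g : F → ℝ} (hg : Measurable g) :
    SameDensity P Z (fun ω => (g (B ω) - A ω, B ω)) := by
  let e : F × ℝ ≃ᵐ F × ℝ :=
    { toFun := fun z => (z.1, g z.1 - z.2)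
      invFun := fun z => (z.1, g z.1 - z.2)
      left_inv := fun z => by simp
      right_inv := fun z => by simp
      measurable_toFun := by simp only [Equiv.coe_fn_mk]; fun_prop
      measurable_invFun := by simp only [Equiv.coe_fn_symm_mk]; fun_prop }
  have he : MeasurePreserving e volume volume :=
    (MeasurePreserving.id (volume : Measure F)).skew_product
      (g := fun b a => g b - a) (by fun_prop)
      (.of_forall fun b => (Measure.measurePreserving_sub_left (volume : Measure ℝ) (g b)).map_eq)
  exact ((h.swap hA hB).equiv (hB.prodMk hA) e he).swap hB ((hg.comp hB).sub hA)

end Invariance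

section Sums

variable {Ω : Type*} [MeasurableSpace Ω] {P : Measure Ω} [IsProbabilityMeasure P]

lemma ProbabilityTheory.CondIndepFun.dent_add_dent {E F G : Type*} [MeasureSpace E] [MeasureSpace F]
    [MeasureSpace G] [SigmaFinite (volume : Measure E)] [SigmaFinite (volume : Measure F)]
    [SigmaFinite (volume : Measure G)] [StandardBorelSpace Ω] [StandardBorelSpace E] [Nonempty E]
    [StandardBorelSpace F] [Nonempty F] {A : Ω → E} {B : Ω → F} {C : Ω → G}
    (hA : Measurable A) (hB : Measurable B) (hC : Measurable C)
    (hind : CondIndepFun (MeasurableSpace.comap C inferInstance) hC.comap_le A B P)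
    (hAC : FiniteDent volume P (fun ω => (A ω, C ω)))
    (hBC : FiniteDent volume P (fun ω => (B ω, C ω))) (hfC : FiniteDent volume P C) :
    dent volume P (fun ω => (A ω, (B ω, C ω))) + dent volume P C =
      dent volume P (fun ω => (A ω, C ω)) + dent volume P (fun ω => (B ω, C ω)) := by
  have h := integral_congr_ae
    (CondIndepFun.logDensity_ae_eq hA hB hC hind hAC.1 hBC.1).2
  have iAC := integrable_logDensity (hA.prodMk hC) hAC
  have iBC := integrable_logDensity (hB.prodMk hC) hBC
  have iC := integrable_logDensity hC hfC
  have iACBC : Integrable (fun ω => logDensity P (fun ω => (A ω, C ω)) ω +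
      logDensity P (fun ω => (B ω, C ω)) ω) P := iAC.add iBC
  rw [integral_sub iACBC iC, integral_add iAC iBC,
    integral_logDensity (hA.prodMk (hB.prodMk hC)), integral_logDensity (hA.prodMk hC),
    integral_logDensity (hB.prodMk hC), integral_logDensity hC] at h
  linarith

lemma dent_sub_prod_add_dent_le {X₁ X₂ Y : Ω → ℝ} (hX₁ : Measurable X₁) (hX₂ : Measurable X₂)
    (hY : Measurable Y) (hfX₁ : FiniteDent volume P X₁) (hfX₂ : FiniteDent volume P X₂)
    (hfY : FiniteDent volume P Y) (hfs₁ : FiniteDent volume P (fun ω => X₁ ω + Y ω))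
    (hfs₂ : FiniteDent volume P (fun ω => X₂ ω + Y ω))
    (hfj : FiniteDent volume P (fun ω => (X₂ ω, (X₁ ω, Y ω))))
    (hfd : FiniteDent volume P (fun ω => (X₁ ω - X₂ ω, Y ω))) :
    dent volume P (fun ω => (X₁ ω - X₂ ω, Y ω)) + dent volume P (fun ω => (X₂ ω, (X₁ ω, Y ω))) ≤
      dent volume P (fun ω => X₁ ω + Y ω) + dent volume P (fun ω => X₂ ω + Y ω) +
        dent volume P X₁ + dent volume P X₂ + dent volume P Y := by
  have hD : Measurable fun ω => X₁ ω - X₂ ω := hX₁.sub hX₂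
  have hs₁ : Measurable fun ω => X₁ ω + Y ω := hX₁.add hY
  have hs₂ : Measurable fun ω => X₂ ω + Y ω := hX₂.add hY
  have triple : SameDensity P (fun ω => (X₂ ω, (X₁ ω, Y ω)))
      (fun ω => (X₁ ω + Y ω, (X₁ ω, X₁ ω - X₂ ω))) := by
    have h := ((((SameDensity.refl hfj.1).comp_sub hX₂ (hX₁.prodMk hY) measurable_fst).rotate
      hD hX₁ hY).swap_right hY hD hX₁).add_comp hY (hX₁.prodMk hD) measurable_fst
    simpa only [add_comm] using h
  have pair_sum : SameDensity P (fun ω => (X₁ ω + Y ω, X₁ ω - X₂ ω))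
      (fun ω => (X₂ ω + Y ω, X₁ ω + Y ω)) := by
    have h := ((SameDensity.refl (map_fst_snd_absolutelyContinuous hs₁ hX₁ hD triple.2.1)).swap
      hs₁ hD).comp_sub hD hs₁ measurable_id
    convert h using 3
    simp
    ring
  have pair : SameDensity P (fun ω => (X₁ ω, X₁ ω - X₂ ω)) (fun ω => (X₂ ω, X₁ ω)) := by
    have h := ((SameDensity.refl (map_snd_absolutelyContinuous hs₁ (hX₁.prodMk hD)
      triple.2.1)).swap hX₁ hD).comp_sub hD hX₁ measurable_id
    simpa using h
  have bound := ((((dominatedByNonpos_submodular hs₁ hX₁ hD triple.2.1).add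
    (dominatedByNonpos_subadditive hD hY hfd.1)).add
    (dominatedByNonpos_subadditive hs₂ hs₁ pair_sum.2.1)).add
    (dominatedByNonpos_subadditive hX₂ hX₁ pair.2.1))
  have i₁ := integrable_logDensity hs₁ hfs₁
  have i₂ := integrable_logDensity hs₂ hfs₂
  have i₃ := integrable_logDensity hX₁ hfX₁
  have i₄ := integrable_logDensity hX₂ hfX₂
  have i₅ := integrable_logDensity hY hfY
  have i₆ := integrable_logDensity (hD.prodMk hY) hfd
  have i₇ := integrable_logDensity (hX₂.prodMk (hX₁.prodMk hY)) hfj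
  have key := (bound.congr (M := logDensity P (fun ω => X₁ ω + Y ω) +
      logDensity P (fun ω => X₂ ω + Y ω) + logDensity P X₁ + logDensity P X₂ + logDensity P Y -
      logDensity P (fun ω => (X₁ ω - X₂ ω, Y ω)) -
      logDensity P (fun ω => (X₂ ω, (X₁ ω, Y ω)))) (by
    filter_upwards [triple.2.2, pair_sum.2.2, pair.2.2] with ω e₁ e₂ e₃
    simp only [Pi.add_apply, Pi.sub_apply]
    linarith)).integral_nonpos
      ((((((i₁.add i₂).add i₃).add i₄).add i₅).sub i₆).sub i₇)
  rw [integral_sub' (((((i₁.add i₂).add i₃).add i₄).add i₅).sub i₆) i₇,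
    integral_sub' ((((i₁.add i₂).add i₃).add i₄).add i₅) i₆,
    integral_add' (((i₁.add i₂).add i₃).add i₄) i₅, integral_add' ((i₁.add i₂).add i₃) i₄,
    integral_add' (i₁.add i₂) i₃, integral_add' i₁ i₂, integral_logDensity hs₁,
    integral_logDensity hs₂, integral_logDensity hX₁, integral_logDensity hX₂,
    integral_logDensity hY, integral_logDensity (hD.prodMk hY),
    integral_logDensity (hX₂.prodMk (hX₁.prodMk hY))] at key
  linarith

lemma dent_add_prod_add_dent_le [StandardBorelSpace Ω] {X₁ X₂ Y Y' : Ω → ℝ}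
    (hX₁ : Measurable X₁) (hX₂ : Measurable X₂) (hY : Measurable Y) (hY' : Measurable Y')
    (hfX₁ : FiniteDent volume P X₁) (hfY : FiniteDent volume P Y) (hfY' : FiniteDent volume P Y')
    (hfs : FiniteDent volume P (fun ω => X₁ ω + Y' ω))
    (hfX₁Y : FiniteDent volume P (fun ω => (X₁ ω, Y ω)))
    (hfX₂Y : FiniteDent volume P (fun ω => (X₂ ω, Y ω)))
    (hfX₁Y' : FiniteDent volume P (fun ω => (X₁ ω, Y' ω)))
    (hfj : FiniteDent volume P (fun ω => (X₂ ω, (X₁ ω, Y ω))))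
    (hft : FiniteDent volume P (fun ω => (X₂ ω + Y' ω, (X₁ ω, Y ω))))
    (hfd : FiniteDent volume P (fun ω => (X₁ ω - X₂ ω, Y ω)))
    (hind : CondIndepFun (MeasurableSpace.comap X₁ inferInstance) hX₁.comap_le
      Y' (fun ω => (X₂ ω, Y ω)) P) :
    dent volume P (fun ω => (X₂ ω + Y' ω, (X₁ ω, Y ω))) + dent volume P (fun ω => (X₁ ω, Y' ω)) +
        dent volume P (fun ω => (X₂ ω, (X₁ ω, Y ω))) + dent volume P Y ≤
      dent volume P (fun ω => X₁ ω + Y' ω) + dent volume P (fun ω => (X₁ ω - X₂ ω, Y ω)) +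
        dent volume P Y' + dent volume P (fun ω => (X₂ ω, Y ω)) +
        dent volume P (fun ω => (X₁ ω, Y ω)) + dent volume P X₁ := by
  have hD : Measurable fun ω => X₁ ω - X₂ ω := hX₁.sub hX₂
  have hS : Measurable fun ω => X₁ ω + Y' ω := hX₁.add hY'
  have hT : Measurable fun ω => X₂ ω + Y' ω := hX₂.add hY'
  have pair : SameDensity P (fun ω => (X₁ ω, Y' ω)) (fun ω => (Y' ω, X₁ ω)) :=
    (SameDensity.refl hfX₁Y'.1).swap hX₁ hY'
  have triple : SameDensity P (fun ω => (X₂ ω, (X₁ ω, Y ω))) (fun ω => ((X₂ ω, Y ω), X₁ ω)) :=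
    ((SameDensity.refl hfj.1).swap_right hX₂ hX₁ hY).assoc_symm hX₂ hY hX₁
  obtain ⟨hac, hfactor⟩ := CondIndepFun.logDensity_ae_eq hY' (hX₂.prodMk hY) hX₁ hind
    pair.2.1 triple.2.1
  have quad : SameDensity P (fun ω => (Y' ω, ((X₂ ω, Y ω), X₁ ω)))
      (fun ω => (X₁ ω + Y' ω, (Y' ω, (X₂ ω + Y' ω, Y ω)))) := by
    have h₁ := ((SameDensity.refl hac).rotate hY' (hX₂.prodMk hY) hX₁).add_comp hX₁
      (hY'.prodMk (hX₂.prodMk hY)) measurable_fst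
    have h₂ := ((h₁.rotate hS hY' (hX₂.prodMk hY)).assoc hX₂ hY (hS.prodMk hY')).add_comp hX₂
      (hY.prodMk (hS.prodMk hY')) (measurable_snd.comp measurable_snd)
    exact ((h₂.assoc_symm hT hY (hS.prodMk hY')).rotate (hT.prodMk hY) hS hY').rotate hY'
      (hT.prodMk hY) hS
  have hac_STY := map_fst_snd_absolutelyContinuous hS hY' (hT.prodMk hY) quad.2.1
  have hac_Y'TY := map_snd_absolutelyContinuous hS (hY'.prodMk (hT.prodMk hY)) quad.2.1
  have sum_diff : SameDensity P (fun ω => (X₁ ω + Y' ω, (X₂ ω + Y' ω, Y ω)))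
      (fun ω => (X₁ ω + Y' ω, (X₁ ω - X₂ ω, Y ω))) := by
    have h := ((((SameDensity.refl hac_STY).rotate hS hT hY).rotate hY hS hT).comp_sub hT
      (hY.prodMk hS) measurable_snd)
    simp only [add_sub_add_right_eq_sub] at h
    exact h.rotate hD hY hS
  have unshift : SameDensity P (fun ω => (Y' ω, (X₂ ω + Y' ω, Y ω)))
      (fun ω => (Y' ω, (X₂ ω, Y ω))) := by
    have h := ((((SameDensity.refl hac_Y'TY).rotate hY' hT hY).rotate hY hY' hT).add_comp hT
      (hY.prodMk hY') (g := fun z => -z.2) measurable_snd.neg)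
    simp only [add_neg_cancel_right] at h
    exact h.rotate hX₂ hY hY'
  have bound := ((((dominatedByNonpos_submodular hS hY' (hT.prodMk hY) quad.2.1).add
    (dominatedByNonpos_subadditive hS (hD.prodMk hY) sum_diff.2.1)).add
    (dominatedByNonpos_subadditive hY' (hX₂.prodMk hY) unshift.2.1)).add
    (dominatedByNonpos_submodular hT hX₁ hY hft.1))
  have i₁ := integrable_logDensity hS hfs
  have i₂ := integrable_logDensity (hD.prodMk hY) hfd
  have i₃ := integrable_logDensity hY' hfY'
  have i₄ := integrable_logDensity (hX₂.prodMk hY) hfX₂Y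
  have i₅ := integrable_logDensity (hX₁.prodMk hY) hfX₁Y
  have i₆ := integrable_logDensity hX₁ hfX₁
  have i₇ := integrable_logDensity hY hfY
  have i₈ := integrable_logDensity (hX₁.prodMk hY') hfX₁Y'
  have i₉ := integrable_logDensity (hX₂.prodMk (hX₁.prodMk hY)) hfj
  have i₁₀ := integrable_logDensity (hT.prodMk (hX₁.prodMk hY)) hft
  have iplus := ((((i₁.add i₂).add i₃).add i₄).add i₅).add i₆
  have iminus := ((i₇.add i₈).add i₉).add i₁₀
  have key := (bound.congr (M := (logDensity P (fun ω => X₁ ω + Y' ω) +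
      logDensity P (fun ω => (X₁ ω - X₂ ω, Y ω)) + logDensity P Y' +
      logDensity P (fun ω => (X₂ ω, Y ω)) + logDensity P (fun ω => (X₁ ω, Y ω)) +
      logDensity P X₁) - (logDensity P Y + logDensity P (fun ω => (X₁ ω, Y' ω)) +
      logDensity P (fun ω => (X₂ ω, (X₁ ω, Y ω))) +
      logDensity P (fun ω => (X₂ ω + Y' ω, (X₁ ω, Y ω))))) (by
    filter_upwards [pair.2.2, triple.2.2, hfactor, quad.2.2, sum_diff.2.2, unshift.2.2]
      with ω e₁ e₂ e₃ e₄ e₅ e₆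
    simp only [Pi.add_apply, Pi.sub_apply]
    linarith)).integral_nonpos (iplus.sub iminus)
  rw [integral_sub' iplus iminus, integral_add' ((((i₁.add i₂).add i₃).add i₄).add i₅) i₆,
    integral_add' (((i₁.add i₂).add i₃).add i₄) i₅, integral_add' ((i₁.add i₂).add i₃) i₄,
    integral_add' (i₁.add i₂) i₃, integral_add' i₁ i₂, integral_add' ((i₇.add i₈).add i₉) i₁₀,
    integral_add' (i₇.add i₈) i₉, integral_add' i₇ i₈, integral_logDensity hS,
    integral_logDensity (hD.prodMk hY), integral_logDensity hY',
    integral_logDensity (hX₂.prodMk hY), integral_logDensity (hX₁.prodMk hY),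
    integral_logDensity hX₁, integral_logDensity hY, integral_logDensity (hX₁.prodMk hY'),
    integral_logDensity (hX₂.prodMk (hX₁.prodMk hY)),
    integral_logDensity (hT.prodMk (hX₁.prodMk hY))] at key
  linarith

end Sums

section IdentDistrib

variable {Ω E : Type*} [MeasurableSpace Ω] [MeasureSpace E] {P : Measure Ω}

lemma ProbabilityTheory.IdentDistrib.dent_eq {A B : Ω → E} (h : IdentDistrib A B P P) :
    dent volume P A = dent volume P B := by
  rw [dent, dent, h.map_eq]

lemma ProbabilityTheory.IdentDistrib.finiteDent {A B : Ω → E} (h : IdentDistrib A B P P)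
    (hB : FiniteDent volume P B) : FiniteDent volume P A := by
  rwa [FiniteDent, h.map_eq]

end IdentDistrib

/-- **Balog-Szemerédi-Gowers lemma for differential entropy.**
Suppose `X, Y` satisfy `h(X,Y) ≥ h(X) + h(Y) - log K` and
`h(X+Y) ≤ ½h(X) + ½h(Y) + log K` for some `K ≥ 1`.  Let `X₁, X₂` be conditionally
independent versions of `X` given `Y`, and let `Y'` be a conditionally independent
version of `Y` given `(X₂, Y)`; that is, `X₂, Y, X₁, Y'` form a Markov chain in which
the pairs `(X₂,Y)`, `(X₁,Y)` and `(X₁,Y')` are each distributed as `(X,Y)`.  Then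
`h(X₂ | X₁, Y) ≥ h(X) - log K`, `h(Y' | X₁, Y) ≥ h(Y) - log K`, and
`h(X₂ + Y' | X₁, Y) ≤ ½h(X) + ½h(Y) + 7·log K`. -/
theorem balog_szemeredi_gowers_diffEntropy
    {Ω : Type*} [MeasurableSpace Ω] [StandardBorelSpace Ω]
    (P : Measure Ω) [IsProbabilityMeasure P]
    (X Y X₁ X₂ Y' : Ω → ℝ)
    (hX : Measurable X) (hY : Measurable Y) (hX₁ : Measurable X₁)
    (hX₂ : Measurable X₂) (hY' : Measurable Y')
    (K : ℝ) (hK : 1 ≤ K)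
    (hfX : FiniteDent volume P X) (hfY : FiniteDent volume P Y)
    (hfXY : FiniteDent volume P (fun ω => (X ω, Y ω)))
    (hfsum : FiniteDent volume P (X + Y))
    (hfX₁Y : FiniteDent volume P (fun ω => (X₁ ω, Y ω)))
    (hfj₁ : FiniteDent volume P (fun ω => (X₂ ω, (X₁ ω, Y ω))))
    (hfj₂ : FiniteDent volume P (fun ω => (Y' ω, (X₁ ω, Y ω))))
    (hfj₃ : FiniteDent volume P (fun ω => (X₂ ω + Y' ω, (X₁ ω, Y ω))))
    (hfdiff : FiniteDent volume P (fun ω => (X₁ ω - X₂ ω, Y ω)))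
    (hdep : dent volume P (fun ω => (X ω, Y ω)) ≥
      dent volume P X + dent volume P Y - Real.log K)
    (hsum : dent volume P (X + Y) ≤
      (1 / 2) * dent volume P X + (1 / 2) * dent volume P Y + Real.log K)
    (hid₂ : IdentDistrib (fun ω => (X₂ ω, Y ω)) (fun ω => (X ω, Y ω)) P P)
    (hid₁ : IdentDistrib (fun ω => (X₁ ω, Y ω)) (fun ω => (X ω, Y ω)) P P)
    (hid' : IdentDistrib (fun ω => (X₁ ω, Y' ω)) (fun ω => (X ω, Y ω)) P P)
    (hmarkov₁ : CondIndepFun (MeasurableSpace.comap Y inferInstance) hY.comap_le X₁ X₂ P)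
    (hmarkov₂ : CondIndepFun (MeasurableSpace.comap X₁ inferInstance) hX₁.comap_le
      Y' (fun ω => (X₂ ω, Y ω)) P) :
    condDent P X₂ (fun ω => (X₁ ω, Y ω)) ≥ dent volume P X - Real.log K ∧
    condDent P Y' (fun ω => (X₁ ω, Y ω)) ≥ dent volume P Y - Real.log K ∧
    condDent P (X₂ + Y') (fun ω => (X₁ ω, Y ω)) ≤
      (1 / 2) * dent volume P X + (1 / 2) * dent volume P Y + 7 * Real.log K := by
  have id_X₁ : IdentDistrib X₁ X P P := hid₁.comp measurable_fst
  have id_X₂ : IdentDistrib X₂ X P P := hid₂.comp measurable_fst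
  have id_Y' : IdentDistrib Y' Y P P := hid'.comp measurable_snd
  have id_s₁ : IdentDistrib (fun ω => X₁ ω + Y ω) (X + Y) P P := hid₁.comp measurable_add
  have id_s₂ : IdentDistrib (fun ω => X₂ ω + Y ω) (X + Y) P P := hid₂.comp measurable_add
  have id_s' : IdentDistrib (fun ω => X₁ ω + Y' ω) (X + Y) P P := hid'.comp measurable_add
  have hfX₁ := id_X₁.finiteDent hfX
  have hfX₂Y := hid₂.finiteDent hfXY
  have hfX₁Y' := hid'.finiteDent hfXY
  have swap_X₁Y := (SameDensity.refl hfX₁Y.1).swap hX₁ hY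
  have swap_X₁Y' := (SameDensity.refl hfX₁Y'.1).swap hX₁ hY'
  have swap_j₂ := (SameDensity.refl hfj₂.1).swap_right hY' hX₁ hY
  have hYX₁ : Measurable fun ω => (Y ω, X₁ ω) := hY.prodMk hX₁
  have hY'X₁ : Measurable fun ω => (Y' ω, X₁ ω) := hY'.prodMk hX₁
  have chain₁ := CondIndepFun.dent_add_dent hX₂ hX₁ hY hmarkov₁.symm hfX₂Y hfX₁Y hfY
  have chain₂ := CondIndepFun.dent_add_dent hY' hY hX₁ (hmarkov₂.comp measurable_id measurable_snd)
    (swap_X₁Y'.finiteDent (hX₁.prodMk hY') hY'X₁ hfX₁Y')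
    (swap_X₁Y.finiteDent (hX₁.prodMk hY) hYX₁ hfX₁Y) hfX₁
  rw [← swap_j₂.dent_eq (hY'.prodMk (hX₁.prodMk hY)) (hY'.prodMk hYX₁),
    ← swap_X₁Y'.dent_eq (hX₁.prodMk hY') hY'X₁,
    ← swap_X₁Y.dent_eq (hX₁.prodMk hY) hYX₁] at chain₂
  have diff := dent_sub_prod_add_dent_le hX₁ hX₂ hY hfX₁ (id_X₂.finiteDent hfX) hfY
    (id_s₁.finiteDent hfsum) (id_s₂.finiteDent hfsum) hfj₁ hfdiff
  have sum := dent_add_prod_add_dent_le hX₁ hX₂ hY hY' hfX₁ hfY (id_Y'.finiteDent hfY)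
    (id_s'.finiteDent hfsum) hfX₁Y hfX₂Y hfX₁Y' hfj₁ hfj₃ hfdiff hmarkov₂
  simp only [hid₁.dent_eq, hid₂.dent_eq, hid'.dent_eq, id_X₁.dent_eq, id_X₂.dent_eq,
    id_Y'.dent_eq, id_s₁.dent_eq, id_s₂.dent_eq, id_s'.dent_eq] at chain₁ chain₂ diff sum
  simp only [condDent, hid₁.dent_eq, Pi.add_apply]
  refine ⟨?_, ?_, ?_⟩ <;> linarith
end
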